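/- Let n ≥ 1 be an integer, θ ∈ (0, π/2) and 1 ≤ k ≤ n. If s_1 and s_2 are C³ capillary functions on C_θ with τ[s_1] > 0 and τ[s_2] > 0 such that σ_k(τ[s_1])(ζ) = σ_k(τ[s_2])(ζ) for all ζ ∈ C_θ, then there exists a vector a ∈ ℝ^{n+1} with ⟨a, E_{n+1}⟩ = 0 such that s_2(ζ) = s_1(ζ) + ⟨a, ζ⟩ for all ζ ∈ C_θ. -/

import Mathlib

open MeasureTheory Real Set
open scoped RealInnerProductSpace

noncomputable section

abbrev V (n : ℕ) := EuclideanSpace ℝ (Fin (n + 1))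

/-- The vertical unit vector `E_{n+1}`. -/
def Etop (n : ℕ) : V n := EuclideanSpace.single (Fin.last n) 1

/-- The spherical cap `S^n_θ`. -/
def sphCap (n : ℕ) (θ : ℝ) : Set (V n) :=
  {u | ‖u‖ = 1 ∧ Real.cos θ ≤ u (Fin.last n)}

/-- The boundary circle `∂S^n_θ`. -/
def sphCapBdry (n : ℕ) (θ : ℝ) : Set (V n) :=
  {u | ‖u‖ = 1 ∧ u (Fin.last n) = Real.cos θ}

/-- The capillary cap `C_θ`. -/
def capCap (n : ℕ) (θ : ℝ) : Set (V n) :=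
  {ζ | 0 ≤ ζ (Fin.last n) ∧ ‖ζ + Real.cos θ • Etop n‖ = 1}

/-- The open cone over `S^n_θ`. -/
def coneCap (n : ℕ) (θ : ℝ) : Set (V n) :=
  {x | ∃ l : ℝ, 0 < l ∧ ∃ u ∈ sphCap n θ, x = l • u}

/-- `G` is a positively 1-homogeneous extension of `g : C_θ → ℝ` which is `C^m` on an
open neighborhood of the cone over `S^n_θ`. -/
def IsHomExt (n : ℕ) (θ : ℝ) (m : ℕ∞) (g G : V n → ℝ) : Prop :=
  (∃ U : Set (V n), IsOpen U ∧ coneCap n θ ⊆ U ∧ ContDiffOn ℝ m G U) ∧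
  (∀ l : ℝ, 0 < l → ∀ u ∈ sphCap n θ, G (l • u) = l * G u) ∧
  (∀ ζ ∈ capCap n θ, G (ζ + Real.cos θ • Etop n) = g ζ)

/-- The Hessian of `G` at `u` as a quadratic/bilinear form. -/
def hessQ (n : ℕ) (G : V n → ℝ) (u v w : V n) : ℝ :=
  fderiv ℝ (fderiv ℝ G) u v w

/-- The Hessian matrix `D²G(u)` in the standard coordinates. -/
def hessM (n : ℕ) (G : V n → ℝ) (u : V n) : Matrix (Fin (n + 1)) (Fin (n + 1)) ℝ :=
  fun i j => fderiv ℝ (fderiv ℝ G) u (EuclideanSpace.single i 1) (EuclideanSpace.single j 1)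

/-- `σ_j` of the eigenvalues of `D²G(u)` (via characteristic polynomial coefficients). -/
def sigmaElem (n : ℕ) (j : ℕ) (G : V n → ℝ) (u : V n) : ℝ :=
  (-1 : ℝ) ^ j * ((hessM n G u).charpoly.coeff (n + 1 - j))

/-- `τ[g] ≥ 0` : the Hessian of the extension is positive semidefinite on `S^n_θ`. -/
def TauNonneg (n : ℕ) (θ : ℝ) (G : V n → ℝ) : Prop :=
  ∀ u ∈ sphCap n θ, ∀ v : V n, 0 ≤ hessQ n G u v v

/-- `τ[g] > 0`. -/
def TauPos (n : ℕ) (θ : ℝ) (G : V n → ℝ) : Prop :=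
  TauNonneg n θ G ∧
  ∀ u ∈ sphCap n θ, ∀ v : V n, v ≠ 0 → ⟪v, u⟫ = 0 → 0 < hessQ n G u v v

/-- Capillary (Robin) boundary condition: `∂_{n+1}G = 0` on `∂S^n_θ`. -/
def IsCapillaryF (n : ℕ) (θ : ℝ) (G : V n → ℝ) : Prop :=
  ∀ u ∈ sphCapBdry n θ, fderiv ℝ G u (Etop n) = 0

/-- Reflection negating the horizontal coordinates. -/
def horizNeg (n : ℕ) (ζ : V n) : V n := (2 * ζ (Fin.last n)) • Etop n - ζ

/-- Support function of a set. -/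
def suppFn (n : ℕ) (K : Set (V n)) (u : V n) : ℝ := sSup ((fun y => ⟪u, y⟫) '' K)

/-- Relative interior (within the hyperplane `{x_{n+1}=0}`) of the base `K ∩ {x_{n+1}=0}`. -/
def relintBase (n : ℕ) (K : Set (V n)) : Set (V n) :=
  {x | x (Fin.last n) = 0 ∧ ∃ ε > 0, ∀ y : V n, y (Fin.last n) = 0 → ‖y - x‖ < ε → y ∈ K}

/-- A `θ`-capillary convex body. -/
def IsCapBody (n : ℕ) (θ : ℝ) (K : Set (V n)) : Prop :=
  IsCompact K ∧ Convex ℝ K ∧ (interior K).Nonempty ∧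
  (∀ x ∈ K, 0 ≤ x (Fin.last n)) ∧
  (∀ x ∈ K, 0 < x (Fin.last n) → ∀ u : V n, ‖u‖ = 1 → ⟪u, x⟫ = suppFn n K u →
    Real.cos θ ≤ u (Fin.last n)) ∧
  (∀ v : V n, ‖v‖ = 1 → v (Fin.last n) = 0 →
    suppFn n K (Real.sin θ • v + Real.cos θ • Etop n) = Real.sin θ * suppFn n K v) ∧
  (relintBase n K).Nonempty

/-- `ψ` is one of `x²`, `x^p (p<0)`, `-log x`. -/
def PsiOK (ψ : ℝ → ℝ) : Prop :=
  (ψ = fun x : ℝ => x ^ 2) ∨ (∃ p : ℝ, p < 0 ∧ ψ = fun x : ℝ => x ^ p) ∨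
    (ψ = fun x : ℝ => -Real.log x)


/-- The elementary symmetric polynomial of degree `k` in the variables `x i`, `i ∈ s`. -/
def esymOn {ι : Type*} (k : ℕ) (s : Finset ι) (x : ι → ℝ) : ℝ :=
  ∑ t ∈ s.powersetCard k, ∏ i ∈ t, x i

section ElementarySymmetric

variable {ι : Type*}

@[simp] lemma esymOn_zero (s : Finset ι) (x : ι → ℝ) : esymOn 0 s x = 1 := by
  simp [esymOn]

lemma esymOn_one (s : Finset ι) (x : ι → ℝ) : esymOn 1 s x = ∑ i ∈ s, x i := by
  simp [esymOn, Finset.powersetCard_one]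

lemma esymOn_smul (k : ℕ) (s : Finset ι) (x : ι → ℝ) (c : ℝ) :
    esymOn k s (fun i => c * x i) = c ^ k * esymOn k s x := by
  unfold esymOn
  rw [Finset.mul_sum]
  refine Finset.sum_congr rfl fun t ht => ?_
  rw [Finset.prod_mul_distrib, Finset.prod_const, (Finset.mem_powersetCard.1 ht).2]

lemma esymOn_comp_perm [Fintype ι] (k : ℕ) (x : ι → ℝ) (e : Equiv.Perm ι) :
    esymOn k Finset.univ (fun i => x (e i)) = esymOn k Finset.univ x := by
  unfold esymOn
  refine Finset.sum_bij (fun t _ => t.map e.toEmbedding) ?_ ?_ ?_ ?_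
  · intro t ht
    simp [Finset.mem_powersetCard] at ht ⊢
    exact ht
  · intro t _ t' _ h
    exact Finset.map_injective _ h
  · intro t ht
    refine ⟨t.map e.symm.toEmbedding, ?_, ?_⟩
    · simp [Finset.mem_powersetCard] at ht ⊢
      exact ht
    · ext i; simp
  · intro t _
    simp

lemma exists_pos_of_esymOn_pos {k : ℕ} {s : Finset ι} {x : ι → ℝ} (hx : ∀ i, 0 ≤ x i)
    (h : 0 < esymOn k s x) : ∃ t ⊆ s, t.card = k ∧ ∀ i ∈ t, 0 < x i := by
  obtain ⟨t, ht, hpos⟩ := Finset.exists_ne_zero_of_sum_ne_zero h.ne'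
  rw [Finset.mem_powersetCard] at ht
  refine ⟨t, ht.1, ht.2, fun i hi => ?_⟩
  exact lt_of_le_of_ne (hx i) (Ne.symm (Finset.prod_ne_zero_iff.1 hpos i hi))

lemma esymOn_pos_of_subset {k : ℕ} {s t : Finset ι} {x : ι → ℝ} (hx : ∀ i, 0 ≤ x i)
    (hts : t ⊆ s) (hk : k ≤ t.card) (ht : ∀ i ∈ t, 0 < x i) : 0 < esymOn k s x := by
  obtain ⟨r, hr, hrk⟩ := Finset.exists_subset_card_eq hk
  refine Finset.sum_pos' (fun _ _ => Finset.prod_nonneg fun i _ => hx i)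
    ⟨r, Finset.mem_powersetCard.2 ⟨hr.trans hts, hrk⟩, ?_⟩
  exact Finset.prod_pos fun i hi => ht i (hr hi)

lemma esymOn_pos_of_le {k l : ℕ} (hkl : k ≤ l) {s : Finset ι} {x : ι → ℝ} (hx : ∀ i, 0 ≤ x i)
    (h : 0 < esymOn l s x) : 0 < esymOn k s x := by
  obtain ⟨t, hts, hc, hpos⟩ := exists_pos_of_esymOn_pos hx h
  exact esymOn_pos_of_subset hx hts (by omega) hpos

lemma esymOn_add_pos {k : ℕ} {s : Finset ι} {x y : ι → ℝ} (hx : ∀ i, 0 ≤ x i)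
    (hy : ∀ i, 0 ≤ y i) (h : 0 < esymOn k s x) : 0 < esymOn k s (x + y) := by
  obtain ⟨t, hts, hc, hpos⟩ := exists_pos_of_esymOn_pos hx h
  exact esymOn_pos_of_subset (fun i => add_nonneg (hx i) (hy i)) hts hc.ge
    fun i hi => add_pos_of_pos_of_nonneg (hpos i hi) (hy i)

variable [DecidableEq ι]

lemma esymOn_succ_erase (k : ℕ) {s : Finset ι} {i : ι} (hi : i ∈ s) (x : ι → ℝ) :
    esymOn (k + 1) s x = esymOn (k + 1) (s.erase i) x + x i * esymOn k (s.erase i) x := by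
  have hn : i ∉ s.erase i := Finset.notMem_erase i s
  conv_lhs => rw [← Finset.insert_erase hi]
  unfold esymOn
  have hmem : ∀ {j : ℕ} {t : Finset ι}, t ∈ (s.erase i).powersetCard j → i ∉ t :=
    fun ht h => hn ((Finset.mem_powersetCard.1 ht).1 h)
  rw [Finset.powersetCard_succ_insert hn, Finset.sum_union, Finset.sum_image, Finset.mul_sum]
  · congr 1
    refine Finset.sum_congr rfl fun t ht => ?_
    rw [Finset.prod_insert (hmem ht)]
  · intro t ht t' ht' h
    rw [← Finset.erase_insert (hmem ht), ← Finset.erase_insert (hmem ht'), h]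
  · rw [Finset.disjoint_left]
    intro t ht h
    obtain ⟨t', _, rfl⟩ := Finset.mem_image.1 h
    exact hmem ht (Finset.mem_insert_self _ _)

lemma succ_mul_esymOn_succ (k : ℕ) (s : Finset ι) (x : ι → ℝ) :
    ((k : ℝ) + 1) * esymOn (k + 1) s x = ∑ i ∈ s, x i * esymOn k (s.erase i) x := by
  have h1 : ∀ i ∈ s, x i * esymOn k (s.erase i) x
      = ∑ t ∈ s.powersetCard (k + 1), if i ∈ t then ∏ j ∈ t, x j else 0 := by
    intro i hi
    have h2 := esymOn_succ_erase k hi x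
    have h3 : esymOn (k + 1) (s.erase i) x
        = ∑ t ∈ s.powersetCard (k + 1), if i ∈ t then 0 else ∏ j ∈ t, x j := by
      have hf : (s.erase i).powersetCard (k + 1)
          = (s.powersetCard (k + 1)).filter (fun t => ¬ i ∈ t) := by
        ext t
        simp only [Finset.mem_powersetCard, Finset.mem_filter, Finset.subset_erase]
        tauto
      rw [esymOn, hf, Finset.sum_filter]
      exact Finset.sum_congr rfl fun t _ => by split_ifs <;> simp_all
    have h4 : esymOn (k + 1) s x = (∑ t ∈ s.powersetCard (k + 1), if i ∈ t then 0 else ∏ j ∈ t, x j)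
        + ∑ t ∈ s.powersetCard (k + 1), if i ∈ t then ∏ j ∈ t, x j else 0 := by
      rw [← Finset.sum_add_distrib, esymOn]
      exact Finset.sum_congr rfl fun t _ => by split_ifs <;> simp
    linarith
  rw [Finset.sum_congr rfl h1, Finset.sum_comm, esymOn, Finset.mul_sum]
  refine Finset.sum_congr rfl fun t ht => ?_
  obtain ⟨hts, hc⟩ := Finset.mem_powersetCard.1 ht
  rw [← Finset.sum_filter, Finset.filter_mem_eq_inter, Finset.inter_eq_right.2 hts,
    Finset.sum_const, hc, nsmul_eq_mul]
  push_cast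
  ring

lemma esymOn_erase_pos {k : ℕ} {s : Finset ι} {x : ι → ℝ} (hx : ∀ i, 0 ≤ x i)
    (h : 0 < esymOn (k + 1) s x) (i : ι) : 0 < esymOn k (s.erase i) x := by
  obtain ⟨t, hts, hc, hpos⟩ := exists_pos_of_esymOn_pos hx h
  refine esymOn_pos_of_subset hx (Finset.erase_subset_erase i hts) ?_
    fun j hj => hpos j (Finset.mem_of_mem_erase hj)
  have := Finset.pred_card_le_card_erase (s := t) (a := i)
  omega

lemma two_mul_esymOn_two (s : Finset ι) (x : ι → ℝ) :
    2 * esymOn 2 s x = (∑ i ∈ s, x i) ^ 2 - ∑ i ∈ s, x i ^ 2 := by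
  have h := succ_mul_esymOn_succ 1 s x
  norm_num at h
  rw [h, sq, Finset.sum_mul, ← Finset.sum_sub_distrib]
  refine Finset.sum_congr rfl fun i hi => ?_
  rw [esymOn_one, ← Finset.add_sum_erase s x hi]
  ring

/-- Superadditivity and monotonicity of the parallel sum `a b / (a + b)`. -/
lemma parallel_sum_superadd {a b c d e : ℝ} (ha : 0 ≤ a) (hc : 0 ≤ c)
    (hab : 0 < a + b) (hcd : 0 < c + d) (he : b + d ≤ e) :
    a * b / (a + b) + c * d / (c + d) ≤ (a + c) * e / (a + c + e) := by
  have h1 : a * b / (a + b) + c * d / (c + d) ≤ (a + c) * (b + d) / (a + c + (b + d)) := by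
    rw [div_add_div _ _ hab.ne' hcd.ne', div_le_div_iff₀ (by positivity) (by linarith)]
    nlinarith [sq_nonneg (a * d - b * c)]
  refine h1.trans ?_
  rw [div_le_div_iff₀ (by linarith) (by linarith)]
  nlinarith [mul_nonneg (mul_nonneg (add_nonneg ha hc) (add_nonneg ha hc)) (sub_nonneg.2 he)]

/-- The Marcus–Lopes inequality: `e_{k+1} / e_k` is superadditive. -/
lemma esymOn_ratio_superadd (k : ℕ) (s : Finset ι) {x y : ι → ℝ} (hx : ∀ i, 0 ≤ x i)
    (hy : ∀ i, 0 ≤ y i) (hxk : 0 < esymOn k s x) (hyk : 0 < esymOn k s y) :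
    esymOn (k + 1) s x / esymOn k s x + esymOn (k + 1) s y / esymOn k s y
      ≤ esymOn (k + 1) s (x + y) / esymOn k s (x + y) := by
  induction k generalizing s with
  | zero =>
    simp [esymOn_one, Finset.sum_add_distrib]
  | succ k ih =>
    have hxy : ∀ i, 0 ≤ (x + y) i := fun i => add_nonneg (hx i) (hy i)
    have key : ∀ z : ι → ℝ, (∀ i, 0 ≤ z i) → 0 < esymOn (k + 1) s z →
        ((k + 1 : ℕ) + 1 : ℝ) * (esymOn (k + 1 + 1) s z / esymOn (k + 1) s z) =
        ∑ i ∈ s, z i * (esymOn (k + 1) (s.erase i) z / esymOn k (s.erase i) z) /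
          (z i + esymOn (k + 1) (s.erase i) z / esymOn k (s.erase i) z) ∧
        ∀ i ∈ s, 0 < z i + esymOn (k + 1) (s.erase i) z / esymOn k (s.erase i) z := by
      intro z hz hpos
      have h0 : ∀ i ∈ s, z i + esymOn (k + 1) (s.erase i) z / esymOn k (s.erase i) z
          = esymOn (k + 1) s z / esymOn k (s.erase i) z := by
        intro i hi
        have := esymOn_erase_pos hz hpos i
        rw [esymOn_succ_erase k hi z]
        field_simp
        ring
      refine ⟨?_, fun i hi => ?_⟩
      · rw [← mul_div_assoc, succ_mul_esymOn_succ, Finset.sum_div]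
        refine Finset.sum_congr rfl fun i hi => ?_
        have := esymOn_erase_pos hz hpos i
        rw [h0 i hi]
        field_simp
      · rw [h0 i hi]
        exact div_pos hpos (esymOn_erase_pos hz hpos i)
    obtain ⟨kx, px⟩ := key x hx hxk
    obtain ⟨ky, py⟩ := key y hy hyk
    obtain ⟨kxy, -⟩ := key (x + y) hxy (esymOn_add_pos hx hy hxk)
    have hc : (0 : ℝ) < ((k + 1 : ℕ) + 1 : ℝ) := by positivity
    rw [← mul_le_mul_iff_right₀ hc, mul_add, kx, ky, kxy, ← Finset.sum_add_distrib]
    refine Finset.sum_le_sum fun i hi => ?_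
    have ex := esymOn_erase_pos hx hxk i
    have ey := esymOn_erase_pos hy hyk i
    exact parallel_sum_superadd (hx i) (hy i) (px i hi) (py i hi) (ih (s.erase i) ex ey)

end ElementarySymmetric

section TangentInequality

variable {ι : Type*}

/-- Quotients of consecutive elementary symmetric polynomials. -/
def esymRatio (k : ℕ) (s : Finset ι) (x : ι → ℝ) : ℝ := esymOn (k + 1) s x / esymOn k s x

lemma prod_esymRatio {m : ℕ} {s : Finset ι} {x : ι → ℝ} (hx : ∀ i, 0 ≤ x i)
    (h : 0 < esymOn m s x) : ∏ j ∈ Finset.range m, esymRatio j s x = esymOn m s x := by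
  induction m with
  | zero => simp
  | succ m ih =>
    have hm := esymOn_pos_of_le (Nat.le_succ m) hx h
    rw [Finset.prod_range_succ, ih hm, esymRatio, mul_div_cancel₀ _ hm.ne']

variable [DecidableEq ι]

lemma esymOn_insert (k : ℕ) {s : Finset ι} {a : ι} (ha : a ∉ s) (x : ι → ℝ) :
    esymOn (k + 1) (insert a s) x = esymOn (k + 1) s x + x a * esymOn k s x := by
  simpa [Finset.erase_insert ha] using
    esymOn_succ_erase k (Finset.mem_insert_self a s) x

lemma hasDerivAt_esymOn_line (k : ℕ) (s : Finset ι) (x y : ι → ℝ) (r : ℝ) :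
    HasDerivAt (fun t : ℝ => esymOn (k + 1) s (x + t • y))
      (∑ i ∈ s, y i * esymOn k (s.erase i) (x + r • y)) r := by
  induction s using Finset.induction_on generalizing k with
  | empty =>
    have h : ∀ z : ι → ℝ, esymOn (k + 1) ∅ z = 0 := fun z => by
      rw [esymOn, Finset.powersetCard_eq_empty.2 (by simp), Finset.sum_empty]
    simpa only [h, Finset.sum_empty] using hasDerivAt_const r (0 : ℝ)
  | insert a s ha ih =>
    have hlin : HasDerivAt (fun t : ℝ => (x + t • y) a) (y a) r := by
      simpa using ((hasDerivAt_id r).mul_const (y a)).const_add (x a)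
    simp_rw [esymOn_insert k ha]
    have hne : ∀ i ∈ s, a ≠ i := fun i hi h => ha (h ▸ hi)
    rw [Finset.sum_insert ha, Finset.erase_insert ha]
    cases k with
    | zero =>
      simp only [esymOn_zero, mul_one]
      have h0 := ih 0
      simp only [esymOn_zero, mul_one] at h0
      rw [add_comm (y a)]
      exact h0.add hlin
    | succ k =>
      refine ((ih (k + 1)).add (hlin.mul (ih k))).congr_deriv ?_
      have : ∀ i ∈ s, y i * esymOn (k + 1) ((insert a s).erase i) (x + r • y)
          = y i * esymOn (k + 1) (s.erase i) (x + r • y)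
            + (x + r • y) a * (y i * esymOn k (s.erase i) (x + r • y)) := by
        intro i hi
        rw [Finset.erase_insert_of_ne (hne i hi),
          esymOn_insert k (fun h => ha (Finset.mem_of_mem_erase h))]
        ring
      rw [Finset.sum_congr rfl this, Finset.sum_add_distrib, ← Finset.mul_sum]
      ring

lemma one_add_sum_le_prod (s : Finset ℕ) (z : ℕ → ℝ) (hz : ∀ i, 0 ≤ z i) :
    1 + ∑ i ∈ s, z i ≤ ∏ i ∈ s, (1 + z i) := by
  induction s using Finset.induction_on with
  | empty => simp
  | insert a s ha ih =>
    rw [Finset.sum_insert ha, Finset.prod_insert ha]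
    have := Finset.sum_nonneg (s := s) fun i _ => hz i
    nlinarith [hz a, mul_nonneg (hz a) this]

lemma le_deriv_of_forall_le {F : ℝ → ℝ} {D L : ℝ} (hF : HasDerivAt F D 0)
    (h : ∀ t, 0 < t → t ≤ 1 → F 0 + t * L ≤ F t) : L ≤ D := by
  have h1 := hF.tendsto_slope_zero_right
  refine ge_of_tendsto h1 ?_
  filter_upwards [Ioo_mem_nhdsGT (zero_lt_one' ℝ)] with t ht
  have := h t ht.1 ht.2.le
  rw [zero_add, smul_eq_mul, inv_mul_eq_div, le_div_iff₀ ht.1]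
  linarith

lemma esymRatio_line {j : ℕ} {s : Finset ι} {x y : ι → ℝ} (hx : ∀ i, 0 ≤ x i)
    (hy : ∀ i, 0 ≤ y i) (hxj : 0 < esymOn j s x) (hyj : 0 < esymOn j s y) {t : ℝ} (ht : 0 < t) :
    esymRatio j s x + t * esymRatio j s y ≤ esymRatio j s (x + t • y) := by
  have e : ∀ k, esymOn k s (t • y) = t ^ k * esymOn k s y := fun k => esymOn_smul k s y t
  have h := esymOn_ratio_superadd j s hx (y := t • y)
    (fun i => mul_nonneg ht.le (hy i)) hxj (by rw [e]; positivity)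
  unfold esymRatio
  refine le_trans (le_of_eq ?_) h
  rw [e, e, pow_succ]
  field_simp

lemma esymRatio_one_line {s : Finset ι} {x y : ι → ℝ} (hx : 0 < ∑ i ∈ s, x i)
    (hy : 0 < ∑ i ∈ s, y i) {t : ℝ} (ht : 0 < t) (ht1 : t ≤ 1) :
    esymRatio 1 s x + t * (esymRatio 1 s y
      + (∑ i ∈ s, ((∑ j ∈ s, y j) * x i - (∑ j ∈ s, x j) * y i) ^ 2)
        / (2 * (∑ j ∈ s, x j) * (∑ j ∈ s, y j) * (∑ j ∈ s, x j + ∑ j ∈ s, y j)))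
      ≤ esymRatio 1 s (x + t • y) := by
  have e2 : ∀ z : ι → ℝ, esymOn 2 s z = ((∑ i ∈ s, z i) ^ 2 - ∑ i ∈ s, z i ^ 2) / 2 := by
    intro z; have := two_mul_esymOn_two s z; linarith
  have hs : ∑ i ∈ s, (x + t • y) i = ∑ i ∈ s, x i + t * ∑ i ∈ s, y i := by
    simp [Finset.sum_add_distrib, Finset.mul_sum]
  have hs2 : ∑ i ∈ s, (x + t • y) i ^ 2
      = ∑ i ∈ s, x i ^ 2 + 2 * t * ∑ i ∈ s, x i * y i + t ^ 2 * ∑ i ∈ s, y i ^ 2 := by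
    rw [Finset.mul_sum, Finset.mul_sum, ← Finset.sum_add_distrib, ← Finset.sum_add_distrib]
    refine Finset.sum_congr rfl fun i _ => ?_
    simp only [Pi.add_apply, Pi.smul_apply, smul_eq_mul]; ring
  have hs3 : ∀ a b : ℝ, ∑ i ∈ s, (b * x i - a * y i) ^ 2
      = b ^ 2 * ∑ i ∈ s, x i ^ 2 - 2 * a * b * ∑ i ∈ s, x i * y i + a ^ 2 * ∑ i ∈ s, y i ^ 2 := by
    intro a b
    rw [Finset.mul_sum, Finset.mul_sum, Finset.mul_sum, ← Finset.sum_sub_distrib,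
      ← Finset.sum_add_distrib]
    refine Finset.sum_congr rfl fun i _ => ?_
    ring
  unfold esymRatio
  rw [show 1 + 1 = 2 from rfl, e2, e2, e2, esymOn_one, esymOn_one, esymOn_one, hs, hs2]
  have hQ := Finset.sum_nonneg (s := s) fun i _ =>
    sq_nonneg ((∑ j ∈ s, y j) * x i - (∑ j ∈ s, x j) * y i)
  rw [hs3] at hQ ⊢
  generalize ∑ i ∈ s, x i = a at *
  generalize ∑ i ∈ s, y i = b at *
  generalize ∑ i ∈ s, x i ^ 2 = p at *
  generalize ∑ i ∈ s, y i ^ 2 = r at *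
  generalize ∑ i ∈ s, x i * y i = c at *
  have hab : 0 < a + t * b := by positivity
  have key : ((a + t * b) ^ 2 - (p + 2 * t * c + t ^ 2 * r)) / 2 / (a + t * b)
      = (a ^ 2 - p) / 2 / a + t * ((b ^ 2 - r) / 2 / b
        + (b ^ 2 * p - 2 * a * b * c + a ^ 2 * r) / (2 * a * b * (a + t * b))) := by
    field_simp
    ring
  rw [key]
  gcongr
  nlinarith

end TangentInequality

lemma esymOn_tangent {ι : Type*} [DecidableEq ι] {k : ℕ} (hk : 1 ≤ k) {s : Finset ι} {x y : ι → ℝ}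
    (hx : ∀ i, 0 ≤ x i) (hy : ∀ i, 0 ≤ y i) (hpos : 0 < esymOn (k + 1) s x)
    (heq : esymOn (k + 1) s x = esymOn (k + 1) s y) :
    ((k : ℝ) + 1) * esymOn (k + 1) s x ≤ ∑ i ∈ s, y i * esymOn k (s.erase i) x ∧
    (∑ i ∈ s, y i * esymOn k (s.erase i) x = ((k : ℝ) + 1) * esymOn (k + 1) s x →
      ∀ i ∈ s, x i = y i) := by
  have hpy : 0 < esymOn (k + 1) s y := heq ▸ hpos
  have hxj : ∀ j ≤ k + 1, 0 < esymOn j s x := fun j hj => esymOn_pos_of_le hj hx hpos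
  have hyj : ∀ j ≤ k + 1, 0 < esymOn j s y := fun j hj => esymOn_pos_of_le hj hy hpy
  have ha : 0 < ∑ i ∈ s, x i := by simpa [esymOn_one] using hxj 1 (by omega)
  have hb : 0 < ∑ i ∈ s, y i := by simpa [esymOn_one] using hyj 1 (by omega)
  set a := ∑ i ∈ s, x i with ha'
  set b := ∑ i ∈ s, y i with hb'
  set Q := ∑ i ∈ s, (b * x i - a * y i) ^ 2 with hQ
  have hQ0 : 0 ≤ Q := Finset.sum_nonneg fun i _ => sq_nonneg _
  set δ := Q / (2 * a * b * (a + b)) with hδ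
  have hδ0 : 0 ≤ δ := by positivity
  have hqx : ∀ j < k + 1, 0 < esymRatio j s x := fun j hj => div_pos (hxj _ hj) (hxj _ hj.le)
  have hqy : ∀ j < k + 1, 0 < esymRatio j s y := fun j hj => div_pos (hyj _ hj) (hyj _ hj.le)
  set r : ℕ → ℝ := fun j => if j < k + 1 then
    (esymRatio j s y + if j = 1 then δ else 0) / esymRatio j s x else 0 with hr
  have hr0 : ∀ j, 0 ≤ r j := by
    intro j
    simp only [hr]
    split_ifs with h1 h2
    · exact div_nonneg (add_nonneg (hqy _ h1).le hδ0) (hqx _ h1).le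
    · exact div_nonneg (add_nonneg (hqy _ h1).le le_rfl) (hqx _ h1).le
    · rfl
  have hD := hasDerivAt_esymOn_line k s x y 0
  simp only [zero_smul, add_zero] at hD
  have hlow : esymOn (k + 1) s x * ∑ j ∈ Finset.range (k + 1), r j
      ≤ ∑ i ∈ s, y i * esymOn k (s.erase i) x := by
    refine le_deriv_of_forall_le hD fun t ht ht1 => ?_
    have hxt : ∀ i, 0 ≤ (x + t • y) i := fun i =>
      add_nonneg (hx i) (mul_nonneg ht.le (hy i))
    have hpt : 0 < esymOn (k + 1) s (x + t • y) :=
      esymOn_add_pos hx (fun i => mul_nonneg ht.le (hy i)) hpos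
    have h1 : ∏ j ∈ Finset.range (k + 1), (esymRatio j s x * (1 + t * r j))
        ≤ ∏ j ∈ Finset.range (k + 1), esymRatio j s (x + t • y) := by
      refine Finset.prod_le_prod (fun j hj => ?_) fun j hj => ?_
      · have := hqx j (Finset.mem_range.1 hj)
        have := hr0 j
        positivity
      · have hj := Finset.mem_range.1 hj
        have e : esymRatio j s x * (1 + t * r j)
            = esymRatio j s x + t * (esymRatio j s y + if j = 1 then δ else 0) := by
          simp only [hr, if_pos hj]
          have := (hqx j hj).ne'
          field_simp
        rw [e]
        split_ifs with h1
        · subst h1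
          exact esymRatio_one_line ha hb ht ht1
        · rw [add_zero]
          exact esymRatio_line hx hy (hxj j hj.le) (hyj j hj.le) ht
    rw [prod_esymRatio hxt hpt, Finset.prod_mul_distrib, prod_esymRatio hx hpos] at h1
    have h2 := one_add_sum_le_prod (Finset.range (k + 1)) (fun j => t * r j)
      fun j => mul_nonneg ht.le (hr0 j)
    rw [← Finset.mul_sum] at h2
    simp only [zero_smul, add_zero]
    nlinarith [mul_le_mul_of_nonneg_left h2 hpos.le]
  have hsum : ∑ j ∈ Finset.range (k + 1), r j
      = ∑ j ∈ Finset.range (k + 1), esymRatio j s y / esymRatio j s x + δ / esymRatio 1 s x := by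
    have : δ / esymRatio 1 s x
        = ∑ j ∈ Finset.range (k + 1), if j = 1 then δ / esymRatio 1 s x else 0 := by
      rw [Finset.sum_ite_eq', if_pos (Finset.mem_range.2 (by omega))]
    rw [this, ← Finset.sum_add_distrib]
    refine Finset.sum_congr rfl fun j hj => ?_
    simp only [hr, if_pos (Finset.mem_range.1 hj)]
    split_ifs with h
    · subst h; rw [add_div]
    · simp
  have hlog : ((k : ℝ) + 1)
      ≤ ∑ j ∈ Finset.range (k + 1), esymRatio j s y / esymRatio j s x := by
    have hp : ∀ j ∈ Finset.range (k + 1), 0 < esymRatio j s y / esymRatio j s x := fun j hj =>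
      div_pos (hqy j (Finset.mem_range.1 hj)) (hqx j (Finset.mem_range.1 hj))
    have h1 : ∑ j ∈ Finset.range (k + 1), Real.log (esymRatio j s y / esymRatio j s x) = 0 := by
      rw [← Real.log_prod (fun j hj => (hp j hj).ne'), Finset.prod_div_distrib,
        prod_esymRatio hx hpos, prod_esymRatio hy hpy, heq, div_self hpy.ne', Real.log_one]
    have h2 := Finset.sum_le_sum fun j hj => Real.log_le_sub_one_of_pos (hp j hj)
    rw [h1, Finset.sum_sub_distrib] at h2
    simp at h2
    linarith
  have hq1 := hqx 1 (by omega)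
  rw [hsum] at hlow
  have hδq : 0 ≤ δ / esymRatio 1 s x := by positivity
  refine ⟨by nlinarith, fun h => ?_⟩
  have hδz : δ = 0 := by
    rw [h] at hlow
    have : δ / esymRatio 1 s x ≤ 0 := by nlinarith
    have : δ ≤ 0 := by
      by_contra hc
      push Not at hc
      exact absurd (div_pos hc hq1) (not_lt.2 this)
    linarith
  have hQz : Q = 0 := by
    rw [hδ, div_eq_zero_iff] at hδz
    exact hδz.resolve_right (by positivity)
  have hprop : ∀ i ∈ s, y i = b / a * x i := by
    intro i hi
    have := (Finset.sum_eq_zero_iff_of_nonneg fun i _ => sq_nonneg _).1 hQz i hi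
    have : b * x i - a * y i = 0 := by simpa using this
    field_simp
    linarith
  have hscale : esymOn (k + 1) s y = (b / a) ^ (k + 1) * esymOn (k + 1) s x := by
    rw [← esymOn_smul]
    refine Finset.sum_congr rfl fun t ht => Finset.prod_congr rfl fun i hi => ?_
    exact hprop i ((Finset.mem_powersetCard.1 ht).1 hi)
  have hone : b / a = 1 := by
    have h1 : (b / a) ^ (k + 1) = 1 := by
      have : ((b / a) ^ (k + 1) - 1) * esymOn (k + 1) s x = 0 := by linarith
      have := (mul_eq_zero.1 this).resolve_right hpos.ne'
      linarith
    exact (pow_eq_one_iff_of_nonneg (by positivity) (Nat.succ_ne_zero k)).1 h1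
  intro i hi
  rw [hprop i hi, hone, one_mul]

section NewtonTransform

open Polynomial Matrix

variable {ι : Type*} [Fintype ι] [DecidableEq ι]

/-- The `m`-th elementary symmetric function of the eigenvalues of a matrix. -/
def sigP (A : Matrix ι ι ℝ) (m : ℕ) : ℝ :=
  ∑ s ∈ Finset.univ.powersetCard m,
    (A.submatrix (Subtype.val : s → ι) (Subtype.val : s → ι)).det

/-- The Newton transformations of a matrix. -/
def newt (A : Matrix ι ι ℝ) : ℕ → Matrix ι ι ℝ
  | 0 => 1
  | m + 1 => sigP A (m + 1) • 1 - A * newt A m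

lemma coeff_det_one_add (A : Matrix ι ι ℝ) (m : ℕ) :
    (det (1 + (X : ℝ[X]) • A.map C)).coeff m = sigP A m :=
  coeff_det_one_add_X_smul_eq_sum_minors A m

lemma sigP_zero (A : Matrix ι ι ℝ) : sigP A 0 = 1 := by
  simp [sigP]

lemma sigP_one (A : Matrix ι ι ℝ) : sigP A 1 = A.trace := by
  rw [← coeff_det_one_add, ← derivative_det_one_add_X_smul, ← coeff_zero_eq_eval_zero,
    coeff_derivative]
  simp

lemma coeff_adjugate_one_add (A : Matrix ι ι ℝ) (m : ℕ) (i j : ι) :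
    (adjugate (1 + (X : ℝ[X]) • A.map C) i j).coeff m = newt A m i j := by
  have h := mul_adjugate (1 + (X : ℝ[X]) • A.map C)
  have hc : ∀ i j : ι, adjugate (1 + (X : ℝ[X]) • A.map C) i j
      = det (1 + (X : ℝ[X]) • A.map C) * (1 : Matrix ι ι ℝ[X]) i j
        - X * ∑ l, C (A i l) * adjugate (1 + (X : ℝ[X]) • A.map C) l j := by
    intro i j
    have h1 := congrFun (congrFun h i) j
    rw [add_mul, one_mul, Matrix.add_apply, smul_mul, Matrix.smul_apply, Matrix.smul_apply,
      smul_eq_mul, smul_eq_mul, Matrix.mul_apply] at h1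
    simp only [Matrix.map_apply] at h1
    rw [← h1]; ring
  induction m generalizing i j with
  | zero =>
    rw [hc, newt]
    by_cases hij : i = j
    · subst hij
      simp [coeff_det_one_add, sigP_zero]
    · simp [hij]
  | succ m ih =>
    rw [hc, newt, coeff_sub, coeff_X_mul, finsetSum_coeff]
    simp only [coeff_C_mul, ih]
    by_cases hij : i = j
    · subst hij
      simp [coeff_det_one_add, Matrix.mul_apply]
    · simp [hij, Matrix.mul_apply]

lemma hasDerivAt_det {M : ℝ → Matrix ι ι ℝ} {M' : Matrix ι ι ℝ} {t₀ : ℝ}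
    (h : ∀ i j, HasDerivAt (fun t => M t i j) (M' i j) t₀) :
    HasDerivAt (fun t => det (M t)) (trace (adjugate (M t₀) * M')) t₀ := by
  have h1 : HasDerivAt (fun t => det (M t)) (∑ σ : Equiv.Perm ι, ((Equiv.Perm.sign σ : ℤ) : ℝ) *
      ∑ i, (∏ j ∈ Finset.univ.erase i, M t₀ (σ j) j) • M' (σ i) i) t₀ := by
    simp only [det_apply']
    refine HasDerivAt.fun_sum fun σ _ => HasDerivAt.const_mul _ ?_
    exact HasDerivAt.fun_finsetProd fun i _ => h (σ i) i
  refine h1.congr_deriv ?_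
  have h2 : trace (adjugate (M t₀) * M') = ∑ i, ((M t₀).updateCol i fun j => M' j i).det := by
    refine Finset.sum_congr rfl fun i _ => ?_
    rw [← cramer_apply, cramer_eq_adjugate_mulVec]
    rfl
  rw [h2]
  simp only [det_apply', Finset.mul_sum]
  rw [Finset.sum_comm]
  refine Finset.sum_congr rfl fun i _ => Finset.sum_congr rfl fun σ _ => ?_
  rw [← Finset.mul_prod_erase Finset.univ _ (Finset.mem_univ i), updateCol_self, smul_eq_mul,
    mul_comm (∏ _ ∈ _, _)]
  congr 2
  refine Finset.prod_congr rfl fun j hj => ?_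
  rw [updateCol_ne (Finset.ne_of_mem_erase hj)]

lemma hasDerivAt_sigP {M : ℝ → Matrix ι ι ℝ} {M' : Matrix ι ι ℝ} {t₀ : ℝ}
    (h : ∀ i j, HasDerivAt (fun t => M t i j) (M' i j) t₀) (m : ℕ) :
    HasDerivAt (fun t => sigP (M t) (m + 1)) (trace (newt (M t₀) m * M')) t₀ := by
  have hd : ∀ m, DifferentiableAt ℝ (fun t => sigP (M t) m) t₀ := by
    intro m
    refine DifferentiableAt.fun_sum fun s _ => ?_
    exact (hasDerivAt_det (M' := M'.submatrix Subtype.val Subtype.val)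
      fun i j => h i j).differentiableAt
  set N := Fintype.card ι
  have hz : ∀ (A : Matrix ι ι ℝ) (m : ℕ), N < m → sigP A m = 0 := by
    intro A m hm
    rw [sigP, Finset.powersetCard_eq_empty.2 (by simpa using hm), Finset.sum_empty]
  -- polynomials in the scaling parameter
  have hev : ∀ (A : Matrix ι ι ℝ) (s : ℝ), det (1 + s • A)
      = ∑ j ∈ Finset.range (N + 1), sigP A j * s ^ j := by
    intro A s
    have h1 : (det (1 + (X : ℝ[X]) • A.map C)).eval s = det (1 + s • A) := by
      rw [← coe_evalRingHom, RingHom.map_det]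
      congr 1
      ext i j
      by_cases hij : i = j
      · subst hij; simp [mul_comm s]
      · simp [hij, mul_comm s]
    rw [← h1, eval_eq_sum_range' (n := N + 1)]
    · simp only [coeff_det_one_add]
    · rw [Nat.lt_succ_iff, natDegree_le_iff_coeff_eq_zero]
      exact fun m hm => by rw [coeff_det_one_add, hz A m hm]
  have hder : ∀ s : ℝ, ∑ j ∈ Finset.range (N + 1), deriv (fun t => sigP (M t) j) t₀ * s ^ j
      = trace (adjugate (1 + s • M t₀) * (s • M')) := by
    intro s
    have h1 : HasDerivAt (fun t => det (1 + s • M t))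
        (∑ j ∈ Finset.range (N + 1), deriv (fun t => sigP (M t) j) t₀ * s ^ j) t₀ := by
      simp only [hev]
      exact HasDerivAt.fun_sum fun j _ => (hd j).hasDerivAt.mul_const _
    refine h1.unique (hasDerivAt_det (M := fun t => 1 + s • M t) fun i j => ?_)
    simpa using ((h i j).const_mul s).const_add ((1 : Matrix ι ι ℝ) i j)
  have hpoly : (∑ j ∈ Finset.range (N + 1), C (deriv (fun t => sigP (M t) j) t₀) * X ^ j : ℝ[X])
      = X * ∑ i, ∑ l, adjugate (1 + (X : ℝ[X]) • (M t₀).map C) i l * C (M' l i) := by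
    refine Polynomial.funext fun s => ?_
    have h1 : ∀ i l, (adjugate (1 + (X : ℝ[X]) • (M t₀).map C) i l).eval s
        = adjugate (1 + s • M t₀) i l := by
      intro i l
      have h2 := RingHom.map_adjugate (evalRingHom s) (1 + (X : ℝ[X]) • (M t₀).map C)
      have h3 : (evalRingHom s).mapMatrix (1 + (X : ℝ[X]) • (M t₀).map C) = 1 + s • M t₀ := by
        ext i j
        by_cases hij : i = j
        · subst hij; simp [mul_comm s]
        · simp [hij, mul_comm s]
      rw [h3] at h2
      rw [← h2]
      rfl
    have h4 := hder s
    simp only [eval_finsetSum, eval_mul, eval_C, eval_pow, eval_X, h1]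
    rw [h4, Matrix.mul_smul, trace_smul, smul_eq_mul]
    rfl
  have hc := congrArg (fun p => p.coeff (m + 1)) hpoly
  simp only [coeff_X_mul, finsetSum_coeff, coeff_C_mul, coeff_mul_C, coeff_adjugate_one_add,
    coeff_X_pow, mul_ite, mul_one, mul_zero, Finset.sum_ite_eq, Finset.mem_range] at hc
  have h5 : deriv (fun t => sigP (M t) (m + 1)) t₀ = trace (newt (M t₀) m * M') := by
    by_cases hm : m + 1 < N + 1
    · rw [if_pos hm] at hc
      rw [hc]; rfl
    · rw [if_neg hm] at hc
      have : (fun t => sigP (M t) (m + 1)) = fun _ => 0 := by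
        funext t; exact hz _ _ (by omega)
      rw [this, deriv_const, hc]; rfl
  rw [← h5]
  exact (hd _).hasDerivAt

lemma newt_mul_comm (A : Matrix ι ι ℝ) (m : ℕ) : A * newt A m = newt A m * A := by
  induction m with
  | zero => simp [newt]
  | succ m ih => rw [newt, mul_sub, sub_mul, ih, ← mul_assoc, ← ih]; simp [mul_assoc]

lemma sigP_conj (A Q : Matrix ι ι ℝ) (hQ : Qᵀ * Q = 1) (m : ℕ) :
    sigP (Q * A * Qᵀ) m = sigP A m := by
  rw [← coeff_det_one_add, ← coeff_det_one_add]
  congr 1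
  have h1 : (X : ℝ[X]) • (Q * A * Qᵀ).map C = ((X : ℝ[X]) • (Q * A).map C) * Qᵀ.map C := by
    rw [smul_mul, Matrix.map_mul]
  rw [h1, det_one_add_mul_comm, Matrix.mul_smul, ← Matrix.map_mul, ← mul_assoc, hQ, one_mul]

lemma newt_conj (A Q : Matrix ι ι ℝ) (hQ : Qᵀ * Q = 1) (hQ' : Q * Qᵀ = 1) (m : ℕ) :
    newt (Q * A * Qᵀ) m = Q * newt A m * Qᵀ := by
  induction m with
  | zero => simp [newt, hQ']
  | succ m ih =>
    rw [newt, newt, ih, sigP_conj A Q hQ]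
    have : Q * A * Qᵀ * (Q * newt A m * Qᵀ) = Q * (A * newt A m) * Qᵀ := by
      calc _ = Q * A * (Qᵀ * Q) * newt A m * Qᵀ := by simp only [mul_assoc]
        _ = _ := by rw [hQ, mul_one]; simp only [mul_assoc]
    rw [this, mul_sub, sub_mul, Matrix.mul_smul, mul_one, Matrix.smul_mul, hQ']

lemma sigP_diagonal (x : ι → ℝ) (m : ℕ) : sigP (diagonal x) m = esymOn m Finset.univ x := by
  refine Finset.sum_congr rfl fun s _ => ?_
  rw [submatrix_diagonal _ _ Subtype.val_injective, det_diagonal]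
  exact Finset.prod_coe_sort s x

lemma newt_diagonal (x : ι → ℝ) (m : ℕ) :
    newt (diagonal x) m = diagonal fun i => esymOn m (Finset.univ.erase i) x := by
  induction m with
  | zero => simp [newt]
  | succ m ih =>
    rw [newt, ih, diagonal_mul_diagonal, sigP_diagonal, ← diagonal_one, ← diagonal_smul,
      diagonal_sub]
    congr 1
    funext i
    rw [esymOn_succ_erase m (Finset.mem_univ i) x]
    simp

lemma exists_eq_conj_diagonal {A : Matrix ι ι ℝ} (hA : A.PosSemidef) :
    ∃ (Q : Matrix ι ι ℝ) (x : ι → ℝ), Qᵀ * Q = 1 ∧ Q * Qᵀ = 1 ∧ (∀ i, 0 ≤ x i) ∧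
      A = Q * diagonal x * Qᵀ := by
  refine ⟨hA.1.eigenvectorUnitary, hA.1.eigenvalues, ?_, ?_, hA.eigenvalues_nonneg, ?_⟩
  · exact Unitary.coe_star_mul_self hA.1.eigenvectorUnitary
  · exact Unitary.coe_mul_star_self hA.1.eigenvectorUnitary
  · have := hA.1.spectral_theorem
    rw [Unitary.conjStarAlgAut_apply] at this
    exact this

lemma trace_newt_mul_self {A : Matrix ι ι ℝ} (hA : A.PosSemidef) (m : ℕ) :
    trace (newt A m * A) = ((m : ℝ) + 1) * sigP A (m + 1) := by
  obtain ⟨Q, x, hQ, hQ', -, rfl⟩ := exists_eq_conj_diagonal hA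
  rw [newt_conj _ _ hQ hQ', sigP_conj _ _ hQ, sigP_diagonal, newt_diagonal]
  have : Q * (diagonal fun i => esymOn m (Finset.univ.erase i) x) * Qᵀ * (Q * diagonal x * Qᵀ)
      = Q * ((diagonal fun i => esymOn m (Finset.univ.erase i) x) * diagonal x) * Qᵀ := by
    calc _ = Q * (diagonal fun i => esymOn m (Finset.univ.erase i) x) * (Qᵀ * Q) *
          diagonal x * Qᵀ := by simp only [mul_assoc]
      _ = _ := by rw [hQ, mul_one]; simp only [mul_assoc]
  rw [this, trace_mul_cycle, hQ, one_mul, diagonal_mul_diagonal, trace_diagonal,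
    succ_mul_esymOn_succ]
  exact Finset.sum_congr rfl fun i _ => mul_comm _ _

end NewtonTransform

section MatrixTangent

open Matrix

variable {ι : Type*} [Fintype ι] [DecidableEq ι]

lemma conj_diagonal_diag (P : Matrix ι ι ℝ) (y : ι → ℝ) (i : ι) :
    (P * diagonal y * Pᵀ) i i = ∑ j, P i j ^ 2 * y j := by
  rw [Matrix.mul_apply]
  refine Finset.sum_congr rfl fun j _ => ?_
  rw [mul_diagonal, transpose_apply]
  ring

lemma exists_perm_weights {P : Matrix ι ι ℝ} (hP : Pᵀ * P = 1) (hP' : P * Pᵀ = 1) :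
    ∃ w : Equiv.Perm ι → ℝ, (∀ σ, 0 ≤ w σ) ∧ ∑ σ, w σ = 1 ∧
      ∀ (y : ι → ℝ) (i : ι), ∑ j, P i j ^ 2 * y j = ∑ σ, w σ * y (σ i) := by
  have hS : (Matrix.of fun i j => P i j ^ 2) ∈ doublyStochastic ℝ ι := by
    rw [mem_doublyStochastic_iff_sum]
    refine ⟨fun i j => sq_nonneg _, fun i => ?_, fun j => ?_⟩
    · have := congrFun (congrFun hP' i) i
      rw [Matrix.mul_apply, one_apply_eq] at this
      rw [← this]
      exact Finset.sum_congr rfl fun j _ => by simp [sq]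
    · have := congrFun (congrFun hP j) j
      rw [Matrix.mul_apply, one_apply_eq] at this
      rw [← this]
      exact Finset.sum_congr rfl fun j _ => by simp [sq]
  obtain ⟨w, hw, hw1, hwM⟩ := exists_eq_sum_perm_of_mem_doublyStochastic hS
  refine ⟨w, hw, hw1, fun y i => ?_⟩
  have h1 : ∀ j, P i j ^ 2 = ∑ σ, w σ * if σ i = j then 1 else 0 := by
    intro j
    have := congrFun (congrFun hwM i) j
    rw [Matrix.sum_apply] at this
    rw [show P i j ^ 2 = Matrix.of (fun i j => P i j ^ 2) i j from rfl, ← this]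
    refine Finset.sum_congr rfl fun σ _ => ?_
    rw [Matrix.smul_apply, smul_eq_mul]
    congr 1
    simp [Equiv.Perm.permMatrix, PEquiv.toMatrix_apply, Equiv.toPEquiv_apply, eq_comm]
  simp_rw [h1, Finset.sum_mul]
  rw [Finset.sum_comm]
  refine Finset.sum_congr rfl fun σ _ => ?_
  simp

theorem sigP_tangent {k : ℕ} (hk : 1 ≤ k) {A B : Matrix ι ι ℝ} (hA : A.PosSemidef)
    (hB : B.PosSemidef) (hpos : 0 < sigP A (k + 1)) (heq : sigP A (k + 1) = sigP B (k + 1)) :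
    ((k : ℝ) + 1) * sigP A (k + 1) ≤ trace (newt A k * B) ∧
    (trace (newt A k * B) = ((k : ℝ) + 1) * sigP A (k + 1) → A = B) := by
  obtain ⟨Q, x, hQ, hQ', hx, rfl⟩ := exists_eq_conj_diagonal hA
  obtain ⟨R, y, hR, hR', hy, rfl⟩ := exists_eq_conj_diagonal hB
  set P := Qᵀ * R with hPdef
  have hPt : Pᵀ = Rᵀ * Q := by rw [hPdef, transpose_mul, transpose_transpose]
  have hP : Pᵀ * P = 1 := by
    rw [hPt, hPdef, mul_assoc, ← mul_assoc Q, hQ', one_mul, hR]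
  have hP' : P * Pᵀ = 1 := by
    rw [hPt, hPdef, mul_assoc, ← mul_assoc R, hR', one_mul, hQ]
  obtain ⟨w, hw, hw1, hwP⟩ := exists_perm_weights hP hP'
  rw [sigP_conj _ _ hQ, sigP_diagonal] at *
  rw [sigP_conj _ _ hR, sigP_diagonal] at heq
  set B' := P * diagonal y * Pᵀ with hB'
  have hconj : Qᵀ * (R * diagonal y * Rᵀ) * Q = B' := by
    rw [hB', hPt, hPdef]; simp only [mul_assoc]
  have htr : trace (newt (Q * diagonal x * Qᵀ) k * (R * diagonal y * Rᵀ))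
      = ∑ i, (∑ σ, w σ * y (σ i)) * esymOn k (Finset.univ.erase i) x := by
    rw [newt_conj _ _ hQ hQ', newt_diagonal, mul_assoc, mul_assoc, trace_mul_comm, mul_assoc,
      hconj]
    refine Finset.sum_congr rfl fun i _ => ?_
    rw [diag_apply, diagonal_mul, hB', conj_diagonal_diag, hwP, mul_comm]
  have htr2 : trace (newt (Q * diagonal x * Qᵀ) k * (R * diagonal y * Rᵀ))
      = ∑ σ, w σ * ∑ i, y (σ i) * esymOn k (Finset.univ.erase i) x := by
    rw [htr]
    simp_rw [Finset.sum_mul, Finset.mul_sum]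
    rw [Finset.sum_comm]
    simp only [mul_assoc]
  have hσ : ∀ σ : Equiv.Perm ι, _ := fun σ =>
    esymOn_tangent hk (s := Finset.univ) hx (y := fun i => y (σ i)) (fun i => hy _) hpos
      (by rw [esymOn_comp_perm, heq])
  have hsum1 : ((k : ℝ) + 1) * esymOn (k + 1) Finset.univ x
      = ∑ σ, w σ * (((k : ℝ) + 1) * esymOn (k + 1) Finset.univ x) := by
    rw [← Finset.sum_mul, hw1, one_mul]
  rw [htr2]
  constructor
  · rw [hsum1]
    exact Finset.sum_le_sum fun σ _ => mul_le_mul_of_nonneg_left (hσ σ).1 (hw σ)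
  · intro h
    have hall : ∀ σ, w σ ≠ 0 → ∀ i, x i = y (σ i) := by
      rw [hsum1] at h
      have h1 := (Finset.sum_eq_sum_iff_of_le fun σ (_ : σ ∈ Finset.univ) =>
        mul_le_mul_of_nonneg_left (hσ σ).1 (hw σ)).1 h.symm
      intro σ hwσ i
      exact (hσ σ).2 (mul_left_cancel₀ hwσ (h1 σ (Finset.mem_univ σ))).symm i (Finset.mem_univ i)
    have hdiag : ∀ i, B' i i = x i := by
      intro i
      rw [hB', conj_diagonal_diag, hwP]
      calc ∑ σ, w σ * y (σ i) = ∑ σ, w σ * x i := by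
            refine Finset.sum_congr rfl fun σ _ => ?_
            by_cases h0 : w σ = 0
            · simp [h0]
            · rw [hall σ h0 i]
        _ = x i := by rw [← Finset.sum_mul, hw1, one_mul]
    obtain ⟨σ₀, -, hσ₀⟩ := Finset.exists_ne_zero_of_sum_ne_zero
      (by rw [hw1]; exact one_ne_zero : ∑ σ, w σ ≠ 0)
    have hsq : ∑ i, y i ^ 2 = ∑ i, x i ^ 2 := by
      rw [← Equiv.sum_comp σ₀ fun i => y i ^ 2]
      exact Finset.sum_congr rfl fun i _ => by rw [hall σ₀ hσ₀ i]
    have hBt : B'ᵀ = B' := by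
      simp only [hB', transpose_mul, transpose_transpose, diagonal_transpose, mul_assoc]
    have hfrob : ∑ i, ∑ j, B' i j ^ 2 = ∑ i, y i ^ 2 := by
      have h1 : trace (B' * B'ᵀ) = ∑ i, y i ^ 2 := by
        have : B' * B'ᵀ = P * (diagonal y * diagonal y) * Pᵀ := by
          rw [hBt, hB']
          calc _ = P * diagonal y * (Pᵀ * P) * diagonal y * Pᵀ := by simp only [mul_assoc]
            _ = _ := by rw [hP, mul_one]; simp only [mul_assoc]
        rw [this, trace_mul_cycle, hP, one_mul, diagonal_mul_diagonal, trace_diagonal]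
        exact Finset.sum_congr rfl fun i _ => (sq _).symm
      rw [← h1]
      refine Finset.sum_congr rfl fun i _ => ?_
      rw [diag_apply, Matrix.mul_apply]
      exact Finset.sum_congr rfl fun j _ => by rw [transpose_apply, sq]
    have hB'd : B' = diagonal x := by
      have h1 : ∀ i ∈ Finset.univ, x i ^ 2 ≤ ∑ j, B' i j ^ 2 := by
        intro i _
        rw [← hdiag i]
        exact Finset.single_le_sum (f := fun j => B' i j ^ 2) (fun j _ => sq_nonneg _)
          (Finset.mem_univ i)
      have h2 := (Finset.sum_eq_sum_iff_of_le h1).1 (by rw [hfrob, hsq])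
      ext i j
      by_cases hij : i = j
      · subst hij; rw [hdiag, diagonal_apply_eq]
      · rw [diagonal_apply_ne _ hij]
        have h3 := h2 i (Finset.mem_univ i)
        rw [← Finset.add_sum_erase _ _ (Finset.mem_univ i), hdiag, left_eq_add,
          Finset.sum_eq_zero_iff_of_nonneg fun j _ => sq_nonneg _] at h3
        exact pow_eq_zero_iff (two_ne_zero) |>.1
          (h3 j (Finset.mem_erase.2 ⟨Ne.symm hij, Finset.mem_univ j⟩))
    rw [← hB'd, ← hconj]
    calc Q * (Qᵀ * (R * diagonal y * Rᵀ) * Q) * Qᵀ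
        = (Q * Qᵀ) * (R * diagonal y * Rᵀ) * (Q * Qᵀ) := by simp only [mul_assoc]
      _ = _ := by rw [hQ', one_mul, mul_one]

/-- A positive semidefinite matrix which is definite on a hyperplane has positive
elementary symmetric functions of every order up to the dimension of the hyperplane. -/
lemma sigP_pos {A : Matrix ι ι ℝ} (hA : A.PosSemidef) (u : ι → ℝ)
    (hpos : ∀ v : ι → ℝ, v ≠ 0 → v ⬝ᵥ u = 0 → 0 < v ⬝ᵥ (A *ᵥ v)) {k : ℕ}
    (hk : k + 1 ≤ Fintype.card ι) : 0 < sigP A k := by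
  obtain ⟨Q, x, hQ, hQ', hx, rfl⟩ := exists_eq_conj_diagonal hA
  rw [sigP_conj _ _ hQ, sigP_diagonal]
  have hquad : ∀ v : ι → ℝ, (Q *ᵥ v) ⬝ᵥ ((Q * diagonal x * Qᵀ) *ᵥ (Q *ᵥ v))
      = ∑ i, x i * v i ^ 2 := by
    intro v
    rw [mulVec_mulVec, mul_assoc, hQ, mul_one, ← mulVec_mulVec, dotProduct_mulVec,
      ← mulVec_transpose, mulVec_mulVec, hQ, one_mulVec]
    refine Finset.sum_congr rfl fun i _ => ?_
    rw [mulVec_diagonal]; ring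
  have hne : ∀ v : ι → ℝ, v ≠ 0 → Q *ᵥ v ≠ 0 := by
    intro v hv h
    apply hv
    rw [← one_mulVec v, ← hQ, ← mulVec_mulVec, h, mulVec_zero]
  -- at most one eigenvalue vanishes
  have hone : ∀ i j, x i = 0 → x j = 0 → i = j := by
    intro i j hi hj
    by_contra hij
    set p := (Q *ᵥ Pi.single i 1) ⬝ᵥ u
    set q := (Q *ᵥ Pi.single j 1) ⬝ᵥ u
    have key : ∀ a b : ℝ, (a ≠ 0 ∨ b ≠ 0) → a * p + b * q = 0 → False := by
      intro a b hab h0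
      set v : ι → ℝ := a • Pi.single i 1 + b • Pi.single j 1 with hv
      have hvi : v i = a := by simp [hv, Pi.single_eq_of_ne hij]
      have hvj : v j = b := by simp [hv, Pi.single_eq_of_ne (Ne.symm hij)]
      have hv0 : v ≠ 0 := by
        intro h
        rcases hab with h1 | h1
        · exact h1 (by rw [← hvi, h]; rfl)
        · exact h1 (by rw [← hvj, h]; rfl)
      have h1 := hpos (Q *ᵥ v) (hne v hv0) (by
        rw [hv, mulVec_add, mulVec_smul, mulVec_smul, add_dotProduct, smul_dotProduct,
          smul_dotProduct, smul_eq_mul, smul_eq_mul]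
        exact h0)
      rw [hquad] at h1
      refine h1.ne' (Finset.sum_eq_zero fun l _ => ?_)
      by_cases hli : l = i
      · rw [hli, hi, zero_mul]
      · by_cases hlj : l = j
        · rw [hlj, hj, zero_mul]
        · simp [hv, Pi.single_eq_of_ne hli, Pi.single_eq_of_ne hlj]
    by_cases hp : p = 0
    · exact key 1 0 (Or.inl one_ne_zero) (by rw [hp]; ring)
    · exact key q (-p) (Or.inr (neg_ne_zero.2 hp)) (by ring)
  by_cases hz : ∃ i, x i = 0
  · obtain ⟨i, hi⟩ := hz
    refine esymOn_pos_of_subset hx (Finset.subset_univ (Finset.univ.erase i)) ?_ fun j hj => ?_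
    · rw [Finset.card_erase_of_mem (Finset.mem_univ i), Finset.card_univ]; omega
    · exact lt_of_le_of_ne (hx j) fun h => Finset.ne_of_mem_erase hj (hone j i h.symm hi)
  · push Not at hz
    refine esymOn_pos_of_subset hx (Finset.Subset.refl _) ?_ fun j _ => ?_
    · rw [Finset.card_univ]; omega
    · exact lt_of_le_of_ne (hx j) (hz j).symm

lemma charpoly_coeff_eq_sigP {n j : ℕ} (A : Matrix (Fin (n + 1)) (Fin (n + 1)) ℝ)
    (hj : j ≤ n + 1) : (-1 : ℝ) ^ j * A.charpoly.coeff (n + 1 - j) = sigP A j := by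
  have := charpoly_coeff_eq_sum_minors A j (by simpa using hj)
  rw [Fintype.card_fin] at this
  rw [this, ← mul_assoc, ← mul_pow]
  simp [sigP]

end MatrixTangent

section ConeGeometry

open Topology

variable {n : ℕ}

/-- The concave function vanishing on the boundary of the cone of opening cosine `c`. -/
def coneFn (n : ℕ) (c : ℝ) (x : V n) : ℝ := x (Fin.last n) - c * ‖x‖

/-- The cone `c‖x‖ ≤ x_{n+1}` without its vertex. -/
def closedConeSet (n : ℕ) (c : ℝ) : Set (V n) := {x | x ≠ 0 ∧ c * ‖x‖ ≤ x (Fin.last n)}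

/-- The open cone `c‖x‖ < x_{n+1}`. -/
def openConeSet (n : ℕ) (c : ℝ) : Set (V n) := {x | c * ‖x‖ < x (Fin.last n)}

lemma continuous_coord (i : Fin (n + 1)) : Continuous fun x : V n => x i :=
  (EuclideanSpace.proj (𝕜 := ℝ) i).continuous

lemma continuous_coneFn (c : ℝ) : Continuous (coneFn n c) :=
  (continuous_coord _).sub (continuous_const.mul continuous_norm)

lemma isOpen_openConeSet (c : ℝ) : IsOpen (openConeSet n c) :=
  isOpen_lt (continuous_const.mul continuous_norm) (continuous_coord _)

lemma ne_zero_of_mem_openConeSet {c : ℝ} {x : V n} (hx : x ∈ openConeSet n c) : x ≠ 0 := by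
  rintro rfl
  simp [openConeSet] at hx

lemma openConeSet_subset (c : ℝ) : openConeSet n c ⊆ closedConeSet n c := fun _ hx =>
  ⟨ne_zero_of_mem_openConeSet hx, le_of_lt hx⟩

lemma mem_openConeSet_iff {c : ℝ} {x : V n} : x ∈ openConeSet n c ↔ 0 < coneFn n c x := by
  rw [coneFn, sub_pos]; rfl

@[simp] lemma Etop_last : Etop n (Fin.last n) = 1 := by simp [Etop]

lemma norm_Etop : ‖Etop n‖ = 1 := by simp [Etop]

lemma inner_single (x : V n) (i : Fin (n + 1)) :
    ⟪x, EuclideanSpace.single i (1 : ℝ)⟫ = x i := by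
  simp [EuclideanSpace.inner_single_right]

lemma convex_coneSet {c : ℝ} (hc : 0 ≤ c) : Convex ℝ {x : V n | c * ‖x‖ ≤ x (Fin.last n)} := by
  intro x hx y hy a b ha hb _
  simp only [mem_ofPred_eq] at *
  have h1 : ‖a • x + b • y‖ ≤ a * ‖x‖ + b * ‖y‖ := by
    refine (norm_add_le _ _).trans (le_of_eq ?_)
    rw [norm_smul, norm_smul, Real.norm_of_nonneg ha, Real.norm_of_nonneg hb]
  have h2 : (a • x + b • y) (Fin.last n) = a * x (Fin.last n) + b * y (Fin.last n) := rfl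
  rw [h2]
  nlinarith [mul_le_mul_of_nonneg_left h1 hc, mul_le_mul_of_nonneg_left hx ha,
    mul_le_mul_of_nonneg_left hy hb]

lemma convex_openConeSet {c : ℝ} (hc : 0 ≤ c) : Convex ℝ (openConeSet n c) := by
  intro x hx y hy a b ha hb hab
  simp only [openConeSet, mem_ofPred_eq] at *
  have h1 : ‖a • x + b • y‖ ≤ a * ‖x‖ + b * ‖y‖ := by
    refine (norm_add_le _ _).trans (le_of_eq ?_)
    rw [norm_smul, norm_smul, Real.norm_of_nonneg ha, Real.norm_of_nonneg hb]
  have h2 : (a • x + b • y) (Fin.last n) = a * x (Fin.last n) + b * y (Fin.last n) := rfl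
  rw [h2]
  have h3 : a * (c * ‖x‖) + b * (c * ‖y‖) < a * x (Fin.last n) + b * y (Fin.last n) := by
    rcases ha.eq_or_lt with rfl | ha
    · have : b = 1 := by linarith
      subst this; simpa using hy
    · exact add_lt_add_of_lt_of_le (mul_lt_mul_of_pos_left hx ha)
        (mul_le_mul_of_nonneg_left hy.le hb)
  nlinarith [mul_le_mul_of_nonneg_left h1 hc]

lemma hasFDerivAt_coneFn (c : ℝ) {x : V n} (hx : x ≠ 0) :
    HasFDerivAt (coneFn n c) (EuclideanSpace.proj (Fin.last n)
      - c • (‖x‖⁻¹ • innerSL ℝ x)) x := by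
  have h1 : HasFDerivAt (fun x : V n => ‖x‖) (‖x‖⁻¹ • innerSL ℝ x) x := by
    have h2 := (hasStrictFDerivAt_norm_sq x).hasFDerivAt.sqrt (by positivity)
    simp only [Real.sqrt_sq (norm_nonneg _)] at h2
    refine h2.congr_fderiv ?_
    ext v
    simp only [smul_apply, smul_eq_mul, nsmul_eq_mul]
    have : ‖x‖ ≠ 0 := norm_ne_zero_iff.2 hx
    push_cast
    simp
    ring
  exact (EuclideanSpace.proj (𝕜 := ℝ) (Fin.last n)).hasFDerivAt.sub (h1.const_mul c)

lemma contDiffAt_coneFn {m : WithTop ℕ∞} (c : ℝ) {x : V n} (hx : x ≠ 0) :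
    ContDiffAt ℝ m (coneFn n c) x :=
  (EuclideanSpace.proj (𝕜 := ℝ) (Fin.last n)).contDiff.contDiffAt.sub
    (contDiffAt_const.mul (contDiffAt_norm ℝ hx))

lemma coneFn_sub_smul_le {c : ℝ} (hc : 0 ≤ c) (x : V n) {s : ℝ} (hs : 0 ≤ s) :
    coneFn n c (x - s • Etop n) ≤ coneFn n c x - s * (1 - c) := by
  have h1 : ‖x‖ ≤ ‖x - s • Etop n‖ + s := by
    have := norm_sub_norm_le x (s • Etop n)
    rw [norm_smul, norm_Etop, mul_one, Real.norm_of_nonneg hs] at this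
    linarith
  have h2 : (x - s • Etop n) (Fin.last n) = x (Fin.last n) - s := by
    simp
  unfold coneFn
  rw [h2]
  nlinarith [mul_le_mul_of_nonneg_left h1 hc]

lemma coneFn_add_smul_ge {c : ℝ} (hc : 0 ≤ c) (x : V n) {s : ℝ} (hs : 0 ≤ s) :
    coneFn n c x + s * (1 - c) ≤ coneFn n c (x + s • Etop n) := by
  have := coneFn_sub_smul_le hc (x + s • Etop n) hs
  rw [add_sub_cancel_right] at this
  linarith

lemma add_smul_mem_openConeSet {c : ℝ} (hc : c ∈ Ioo (0 : ℝ) 1) {x : V n}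
    (hx : c * ‖x‖ ≤ x (Fin.last n)) {s : ℝ} (hs : 0 < s) : x + s • Etop n ∈ openConeSet n c := by
  rw [mem_openConeSet_iff]
  have h1 : 0 ≤ coneFn n c x := sub_nonneg.2 hx
  have := coneFn_add_smul_ge hc.1.le x hs.le
  nlinarith [hc.2, mul_pos hs (sub_pos.2 hc.2)]

/-- A `C¹` function vanishing on the boundary of the cone grows at most linearly. -/
lemma exists_linear_bound {c : ℝ} (hc : c ∈ Ioo (0 : ℝ) 1) {U : Set (V n)} (hU : IsOpen U)
    (hsub : closedConeSet n c ⊆ U) {Z : V n → ℝ} (hZ : ContDiffOn ℝ 1 Z U)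
    (hbd : ∀ x : V n, x ≠ 0 → x (Fin.last n) = c * ‖x‖ → Z x = 0) {r R : ℝ} (hr : 0 < r) :
    ∃ K : ℝ, 0 ≤ K ∧ ∀ x ∈ openConeSet n c, r ≤ ‖x‖ → ‖x‖ ≤ R → |Z x| ≤ K * coneFn n c x := by
  obtain ⟨hc0, hc1⟩ := hc
  set m := c * r / 2 with hm
  have hm0 : 0 < m := by positivity
  set S : Set (V n) := ({x | c * ‖x‖ ≤ x (Fin.last n)} ∩ {x | m ≤ x (Fin.last n)})
    ∩ Metric.closedBall 0 (R / c) with hS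
  have hScpt : IsCompact S := by
    refine (isCompact_closedBall _ _).inter_left ?_
    exact (isClosed_le (continuous_const.mul continuous_norm) (continuous_coord _)).inter
      (isClosed_le continuous_const (continuous_coord _))
  have hSconv : Convex ℝ S := by
    refine ((convex_coneSet hc0.le).inter ?_).inter (convex_closedBall _ _)
    exact convex_halfSpace_ge (EuclideanSpace.proj (𝕜 := ℝ) (Fin.last n)).toLinearMap.isLinear m
  have hSU : S ⊆ U := by
    rintro x ⟨⟨h1, h2⟩, -⟩
    refine hsub ⟨?_, h1⟩
    rintro rfl
    exact absurd h2 (by simpa using hm0)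
  have hfd : ContinuousOn (fderiv ℝ Z) S := (hZ.continuousOn_fderiv_of_isOpen hU le_rfl).mono hSU
  obtain ⟨L, hL⟩ := hScpt.exists_bound_of_continuousOn hfd
  obtain ⟨B, hB⟩ := hScpt.exists_bound_of_continuousOn (hZ.continuousOn.mono hSU)
  set t₀ := (1 - c) * m with ht₀
  have ht₀p : 0 < t₀ := mul_pos (by linarith) hm0
  refine ⟨max (max L 0 / (1 - c)) (max B 0 / t₀), le_max_of_le_left (by
    exact div_nonneg (le_max_right _ _) (by linarith)), fun x hx hrx hxR => ?_⟩
  have hτ : 0 < coneFn n c x := mem_openConeSet_iff.1 hx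
  have hxl : 2 * m ≤ x (Fin.last n) := by
    have : c * ‖x‖ < x (Fin.last n) := hx
    have := mul_le_mul_of_nonneg_left hrx hc0.le
    linarith
  have hRc : R ≤ R / c := by
    rw [le_div_iff₀ hc0]
    nlinarith
  have hxS : x ∈ S := ⟨⟨show c * ‖x‖ ≤ x (Fin.last n) from le_of_lt hx,
    show m ≤ x (Fin.last n) by linarith⟩, by
    rw [mem_closedBall_zero_iff]; linarith⟩
  rcases le_or_gt t₀ (coneFn n c x) with hbig | hsmall
  · have h1 : |Z x| ≤ B := hB x hxS
    calc |Z x| ≤ max B 0 := h1.trans (le_max_left _ _)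
      _ = max B 0 / t₀ * t₀ := by field_simp
      _ ≤ max B 0 / t₀ * coneFn n c x := by
        exact mul_le_mul_of_nonneg_left hbig (div_nonneg (le_max_right _ _) ht₀p.le)
      _ ≤ _ := mul_le_mul_of_nonneg_right (le_max_right _ _) hτ.le
  · have hcont : ContinuousOn (fun s : ℝ => coneFn n c (x - s • Etop n))
        (Icc 0 (x (Fin.last n))) := by
      refine ((continuous_coneFn c).comp ?_).continuousOn
      fun_prop
    have h0 : (0 : ℝ) ∈ Icc (coneFn n c (x - x (Fin.last n) • Etop n))
        (coneFn n c (x - (0 : ℝ) • Etop n)) := by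
      refine ⟨?_, by simpa using hτ.le⟩
      have : (x - x (Fin.last n) • Etop n) (Fin.last n) = 0 := by simp
      rw [coneFn, this, zero_sub, neg_nonpos]
      positivity
    obtain ⟨s, hs, hs0⟩ := intermediate_value_Icc' (by linarith) hcont h0
    simp only at hs0
    have hsτ : s * (1 - c) ≤ coneFn n c x := by
      have := coneFn_sub_smul_le hc0.le x hs.1
      linarith
    have hsm : s ≤ m := by
      by_contra h
      push Not at h
      nlinarith
    set y := x - s • Etop n with hy
    have hyl : y (Fin.last n) = x (Fin.last n) - s := by simp [hy]
    have hyc : y (Fin.last n) = c * ‖y‖ := by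
      have := hs0; unfold coneFn at this; linarith
    have hym : m ≤ y (Fin.last n) := by rw [hyl]; linarith
    have hyS : y ∈ S := by
      refine ⟨⟨hyc.ge, hym⟩, ?_⟩
      rw [mem_closedBall_zero_iff, le_div_iff₀ hc0, mul_comm, ← hyc, hyl]
      have h1 : x (Fin.last n) ≤ ‖x‖ := (le_abs_self _).trans (by
        simpa using PiLp.norm_apply_le x (Fin.last n))
      linarith [hs.1]
    have hy0 : Z y = 0 := by
      refine hbd y ?_ hyc
      rintro h
      rw [h] at hym
      exact absurd hym (by simpa using hm0)
    have hmv := hSconv.norm_image_sub_le_of_norm_fderiv_le (𝕜 := ℝ) (f := Z) (C := L)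
      (fun z hz => (hZ.differentiableOn one_ne_zero).differentiableAt (hU.mem_nhds (hSU hz)))
      hL hyS hxS
    have hxy : x - y = s • Etop n := by simp [hy]
    rw [hy0, sub_zero, hxy, norm_smul, norm_Etop, mul_one, Real.norm_of_nonneg hs.1,
      Real.norm_eq_abs] at hmv
    calc |Z x| ≤ max L 0 * s := hmv.trans (mul_le_mul_of_nonneg_right (le_max_left _ _) hs.1)
      _ = max L 0 / (1 - c) * (s * (1 - c)) := by
        have : 1 - c ≠ 0 := by linarith
        field_simp
      _ ≤ max L 0 / (1 - c) * coneFn n c x :=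
        mul_le_mul_of_nonneg_left hsτ (div_nonneg (le_max_right _ _) (by linarith))
      _ ≤ _ := mul_le_mul_of_nonneg_right (le_max_left _ _) hτ.le

end ConeGeometry

section ConeDivergence

open Topology Filter

variable {n : ℕ}

/-- The divergence of a vector field given by its components. -/
def divg (n : ℕ) (Z : Fin (n + 1) → V n → ℝ) (x : V n) : ℝ :=
  ∑ i, fderiv ℝ (Z i) x (EuclideanSpace.single i 1)

lemma integral_fderiv_eq_zero {f : V n → ℝ} (hf : ContDiff ℝ 1 f) (hs : HasCompactSupport f)
    (v : V n) : ∫ x, fderiv ℝ f x v = 0 := by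
  have hint : Integrable (fun x => fderiv ℝ f x v) := by
    refine Continuous.integrable_of_hasCompactSupport ?_ ?_
    · exact (hf.continuous_fderiv one_ne_zero).clm_apply continuous_const
    · exact hs.fderiv_apply (𝕜 := ℝ) v
  have h := integral_mul_fderiv_eq_neg_fderiv_mul_of_integrable (μ := volume) (f := f)
    (g := fun _ => (1 : ℝ)) (v := v) (by simpa using hint) (by simp)
    (by simpa using hf.continuous.integrable_of_hasCompactSupport hs)
    (fun x _ => hf.differentiable one_ne_zero x) (fun x _ => differentiableAt_const _)
  simpa using h

lemma exists_bound_deriv_smoothTransition :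
    ∃ M : ℝ, 0 ≤ M ∧ ∀ t : ℝ, |deriv Real.smoothTransition t| ≤ M := by
  have hc : Continuous (deriv Real.smoothTransition) :=
    (Real.smoothTransition.contDiff (n := 1)).continuous_deriv le_rfl
  obtain ⟨M, hM⟩ := isCompact_Icc.exists_bound_of_continuousOn (s := Icc (0 : ℝ) 1) hc.continuousOn
  refine ⟨max M 0, le_max_right _ _, fun t => ?_⟩
  by_cases ht : t ∈ Icc (0 : ℝ) 1
  · exact (hM t ht).trans (le_max_left _ _)
  · have : deriv Real.smoothTransition t = 0 := by
      rcases not_and_or.1 ht with h | h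
      · have : Real.smoothTransition =ᶠ[𝓝 t] fun _ => 0 := by
          filter_upwards [gt_mem_nhds (not_le.1 h)] with s hs
          exact Real.smoothTransition.zero_of_nonpos hs.le
        rw [this.deriv_eq, deriv_const]
      · have : Real.smoothTransition =ᶠ[𝓝 t] fun _ => 1 := by
          filter_upwards [lt_mem_nhds (not_le.1 h)] with s hs
          exact Real.smoothTransition.one_of_one_le hs.le
        rw [this.deriv_eq, deriv_const]
    rw [this, abs_zero]
    exact le_max_right _ _

lemma deriv_smoothTransition_eq_zero {t : ℝ} (ht : t < 0 ∨ 1 < t) :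
    deriv Real.smoothTransition t = 0 := by
  rcases ht with h | h
  · have : Real.smoothTransition =ᶠ[𝓝 t] fun _ => 0 := by
      filter_upwards [gt_mem_nhds h] with s hs
      exact Real.smoothTransition.zero_of_nonpos hs.le
    rw [this.deriv_eq, deriv_const]
  · have : Real.smoothTransition =ᶠ[𝓝 t] fun _ => 1 := by
      filter_upwards [lt_mem_nhds h] with s hs
      exact Real.smoothTransition.one_of_one_le hs.le
    rw [this.deriv_eq, deriv_const]

section Cutoff

variable {c : ℝ} {U : Set (V n)} {Z : Fin (n + 1) → V n → ℝ}

/-- The radial and conical cutoff of a component of a vector field. -/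
def cutField (c : ℝ) {ρ : ℝ} (b : ContDiffBump ρ) (j : ℝ) (Y : V n → ℝ) (x : V n) : ℝ :=
  b (‖x‖ ^ 2) * Real.smoothTransition (j * coneFn n c x - 1) * Y x

lemma cutField_eventually_zero {ρ : ℝ} (b : ContDiffBump ρ) {j : ℝ} (hj : 0 < j)
    (Y : V n → ℝ) {x : V n} (hx : x ∉ openConeSet n c) :
    cutField c b j Y =ᶠ[𝓝 x] fun _ => 0 := by
  rw [mem_openConeSet_iff, not_lt] at hx
  have h1 : ∀ᶠ y in 𝓝 x, coneFn n c y < 1 / j :=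
    (continuous_coneFn c).continuousAt.eventually_lt continuousAt_const
      (lt_of_le_of_lt hx (by positivity))
  filter_upwards [h1] with y hy
  rw [cutField, Real.smoothTransition.zero_of_nonpos, mul_zero, zero_mul]
  rw [lt_div_iff₀ hj] at hy
  linarith

lemma contDiff_cutField {ρ : ℝ} (b : ContDiffBump ρ) {j : ℝ} (hj : 0 < j)
    (hU : IsOpen U) (hsub : closedConeSet n c ⊆ U) {Y : V n → ℝ} (hY : ContDiffOn ℝ 1 Y U) :
    ContDiff ℝ 1 (cutField c b j Y) := by
  rw [contDiff_iff_contDiffAt]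
  intro x
  by_cases hx : x ∈ openConeSet n c
  · have hx0 := ne_zero_of_mem_openConeSet hx
    refine ((b.contDiff.contDiffAt.comp x (contDiff_norm_sq ℝ).contDiffAt).mul
      (Real.smoothTransition.contDiff.contDiffAt.comp x ?_)).mul
      (hY.contDiffAt (hU.mem_nhds (hsub (openConeSet_subset c hx))))
    exact (contDiffAt_const.mul (contDiffAt_coneFn c hx0)).sub contDiffAt_const
  · exact contDiffAt_const.congr_of_eventuallyEq (cutField_eventually_zero b hj Y hx)

lemma hasCompactSupport_cutField {ρ : ℝ} (b : ContDiffBump ρ) (j : ℝ) (Y : V n → ℝ) :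
    HasCompactSupport (cutField c b j Y) := by
  refine HasCompactSupport.of_support_subset_isCompact
    (isCompact_closedBall (0 : V n) (1 + (ρ + b.rOut))) fun x hx => ?_
  have h1 : b (‖x‖ ^ 2) ≠ 0 := fun h => hx (by simp [cutField, h])
  have h2 : ‖x‖ ^ 2 ∈ Metric.ball ρ b.rOut := by rw [← b.support_eq]; exact h1
  rw [Metric.mem_ball, Real.dist_eq, abs_lt] at h2
  rw [mem_closedBall_zero_iff]
  nlinarith [sq_nonneg (‖x‖ - 1), norm_nonneg x]

lemma divg_cutField {ρ : ℝ} (b : ContDiffBump ρ) {j : ℝ}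
    {x : V n} (hx : x ∈ openConeSet n c) (hZ : ∀ i, DifferentiableAt ℝ (Z i) x)
    (hdot : ∑ i, Z i x * x i = 0) :
    divg n (fun i => cutField c b j (Z i)) x
      = b (‖x‖ ^ 2) * Real.smoothTransition (j * coneFn n c x - 1) * divg n Z x
        + b (‖x‖ ^ 2) * (j * deriv Real.smoothTransition (j * coneFn n c x - 1))
          * Z (Fin.last n) x := by
  have hx0 := ne_zero_of_mem_openConeSet hx
  have hχ : HasFDerivAt (fun y : V n => b (‖y‖ ^ 2))
      (deriv b (‖x‖ ^ 2) • (2 • innerSL ℝ x)) x :=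
    (((b.contDiff (n := 1)).differentiable one_ne_zero _).hasDerivAt).comp_hasFDerivAt x
      (hasStrictFDerivAt_norm_sq x).hasFDerivAt
  have hη : HasFDerivAt (fun y : V n => Real.smoothTransition (j * coneFn n c y - 1))
      (deriv Real.smoothTransition (j * coneFn n c x - 1) • (j • (EuclideanSpace.proj (Fin.last n)
        - c • (‖x‖⁻¹ • innerSL ℝ x)))) x :=
    (((Real.smoothTransition.contDiff (n := 1)).differentiable one_ne_zero
      _).hasDerivAt).comp_hasFDerivAt x (((hasFDerivAt_coneFn c hx0).const_mul j).sub_const 1)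
  set B := b (‖x‖ ^ 2)
  set S := Real.smoothTransition (j * coneFn n c x - 1)
  set S' := deriv Real.smoothTransition (j * coneFn n c x - 1)
  set b' := deriv b (‖x‖ ^ 2)
  have hterm : ∀ i, fderiv ℝ (cutField c b j (Z i)) x (EuclideanSpace.single i 1)
      = B * S * fderiv ℝ (Z i) x (EuclideanSpace.single i 1)
        + (2 * b' * S - B * S' * j * c * ‖x‖⁻¹) * (Z i x * x i)
        + B * (j * S') * (if i = Fin.last n then Z i x else 0) := by
    intro i
    have h := ((hχ.mul hη).mul (hZ i).hasFDerivAt).fderiv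
    have h' : cutField c b j (Z i) = ((fun y : V n => b (‖y‖ ^ 2)) *
      fun y : V n => Real.smoothTransition (j * coneFn n c y - 1)) * Z i := rfl
    rw [h', h]
    have hp : (EuclideanSpace.single i (1 : ℝ) : V n) (Fin.last n)
        = if i = Fin.last n then 1 else 0 := by
      simp [eq_comm]
    have hp' : (EuclideanSpace.proj (Fin.last n) : V n →L[ℝ] ℝ) (EuclideanSpace.single i 1)
        = if i = Fin.last n then 1 else 0 := hp
    simp only [add_apply, smul_apply, sub_apply, smul_eq_mul, innerSL_apply_apply, inner_single,
      hp', nsmul_eq_mul, Pi.mul_apply, B, S, S', b']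
    split_ifs <;> push_cast <;> ring
  unfold divg
  simp_rw [hterm]
  rw [Finset.sum_add_distrib, Finset.sum_add_distrib, ← Finset.mul_sum, ← Finset.mul_sum,
    ← Finset.mul_sum, hdot, Finset.sum_ite_eq', if_pos (Finset.mem_univ _)]
  ring

end Cutoff

/-- A tangential vector field with nonnegative divergence on the cone whose vertical component
vanishes on the boundary is divergence free. -/
theorem divg_eq_zero_of_nonneg {c : ℝ} (hc : c ∈ Ioo (0 : ℝ) 1) {U : Set (V n)} (hU : IsOpen U)
    (hsub : closedConeSet n c ⊆ U) {Z : Fin (n + 1) → V n → ℝ}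
    (hZ : ∀ i, ContDiffOn ℝ 1 (Z i) U)
    (hdot : ∀ x ∈ openConeSet n c, ∑ i, Z i x * x i = 0)
    (hbd : ∀ x : V n, x ≠ 0 → x (Fin.last n) = c * ‖x‖ → Z (Fin.last n) x = 0)
    (hdiv : ∀ x ∈ openConeSet n c, 0 ≤ divg n Z x) {x₀ : V n} (hx₀ : x₀ ∈ openConeSet n c) :
    divg n Z x₀ = 0 := by
  classical
  set Ω := openConeSet n c with hΩ
  have hΩU : Ω ⊆ U := (openConeSet_subset c).trans hsub
  have hx₀0 := ne_zero_of_mem_openConeSet hx₀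
  set ρ := ‖x₀‖ ^ 2 with hρ
  have hρ0 : 0 < ρ := by positivity
  let b : ContDiffBump ρ := ⟨ρ / 4, ρ / 2, by positivity, by linarith⟩
  have hdivc : ContinuousOn (divg n Z) U := by
    refine continuousOn_finsetSum _ fun i _ => ?_
    exact ((hZ i).continuousOn_fderiv_of_isOpen hU le_rfl).clm_apply continuousOn_const
  set r := Real.sqrt (ρ / 2) with hr
  set R := Real.sqrt (3 * ρ / 2) with hR
  have hr0 : 0 < r := Real.sqrt_pos.2 (by positivity)
  have hball : ∀ x : V n, b (‖x‖ ^ 2) ≠ 0 → r ≤ ‖x‖ ∧ ‖x‖ ≤ R := by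
    intro x hx
    have h2 : ‖x‖ ^ 2 ∈ Metric.ball ρ b.rOut := by rw [← b.support_eq]; exact hx
    rw [Metric.mem_ball, Real.dist_eq, abs_lt] at h2
    change -(ρ / 2) < _ ∧ _ < ρ / 2 at h2
    exact ⟨(Real.sqrt_le_left (norm_nonneg x)).2 (by linarith),
      Real.le_sqrt_of_sq_le (by linarith)⟩
  obtain ⟨K, hK0, hK⟩ := exists_linear_bound hc hU hsub (hZ (Fin.last n)) hbd (R := R) hr0
  obtain ⟨M, hM0, hM⟩ := exists_bound_deriv_smoothTransition
  obtain ⟨L, hL⟩ : ∃ L : ℝ, ∀ x ∈ Ω, r ≤ ‖x‖ → ‖x‖ ≤ R → |divg n Z x| ≤ L := by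
    have hcpt : IsCompact (({x : V n | c * ‖x‖ ≤ x (Fin.last n)} ∩ {x | r ≤ ‖x‖})
        ∩ Metric.closedBall 0 R) := by
      refine (isCompact_closedBall _ _).inter_left ?_
      exact (isClosed_le (continuous_const.mul continuous_norm) (continuous_coord _)).inter
        (isClosed_le continuous_const continuous_norm)
    obtain ⟨L, hL⟩ := hcpt.exists_bound_of_continuousOn (hdivc.mono (by
      rintro x ⟨⟨h1, h2⟩, -⟩
      refine hsub ⟨?_, h1⟩
      rintro rfl
      exact absurd h2 (by simpa using hr0)))
    exact ⟨L, fun x hx h1 h2 => hL x ⟨⟨show c * ‖x‖ ≤ x (Fin.last n) from le_of_lt hx, h1⟩, by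
      rwa [mem_closedBall_zero_iff]⟩⟩
  set F : ℕ → V n → ℝ := fun j => divg n fun i => cutField c b (j + 1) (Z i) with hF
  set G : V n → ℝ := Ω.indicator fun x => b (‖x‖ ^ 2) * divg n Z x with hG
  have hj0 : ∀ j : ℕ, (0 : ℝ) < j + 1 := fun j => by positivity
  have hcut : ∀ (j : ℕ) i, ContDiff ℝ 1 (cutField c b ((j : ℝ) + 1) (Z i)) := fun j i =>
    contDiff_cutField b (hj0 j) hU hsub (hZ i)
  have hFin : ∀ (j : ℕ) (x : V n), x ∈ Ω → F j x
      = b (‖x‖ ^ 2) * Real.smoothTransition ((j + 1) * coneFn n c x - 1) * divg n Z x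
        + b (‖x‖ ^ 2) * ((j + 1) * deriv Real.smoothTransition ((j + 1) * coneFn n c x - 1))
          * Z (Fin.last n) x := fun j x hx =>
    divg_cutField b hx (fun i => ((hZ i).differentiableOn one_ne_zero).differentiableAt
      (hU.mem_nhds (hΩU hx))) (hdot x hx)
  have hFout : ∀ (j : ℕ) (x : V n), x ∉ Ω → F j x = 0 := by
    intro j x hx
    refine Finset.sum_eq_zero fun i _ => ?_
    rw [(cutField_eventually_zero b (hj0 j) (Z i) hx).fderiv_eq]
    simp
  have hFc : ∀ j, Continuous (F j) := fun j => continuous_finsetSum _ fun i _ =>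
    ((hcut j i).continuous_fderiv one_ne_zero).clm_apply continuous_const
  have hFint : ∀ j, ∫ x, F j x = 0 := by
    intro j
    simp only [hF, divg]
    rw [integral_finsetSum]
    · exact Finset.sum_eq_zero fun i _ => integral_fderiv_eq_zero (hcut j i)
        (hasCompactSupport_cutField b _ _) _
    · intro i _
      refine Continuous.integrable_of_hasCompactSupport ?_ ?_
      · exact ((hcut j i).continuous_fderiv one_ne_zero).clm_apply continuous_const
      · exact (hasCompactSupport_cutField b _ _).fderiv_apply (𝕜 := ℝ) _
  have hlim : ∀ x, Tendsto (fun j => F j x) atTop (𝓝 (G x)) := by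
    intro x
    by_cases hx : x ∈ Ω
    · have hτ := mem_openConeSet_iff.1 hx
      refine tendsto_const_nhds.congr' ?_
      obtain ⟨J, hJ⟩ := exists_nat_gt (2 / coneFn n c x)
      filter_upwards [eventually_ge_atTop J] with j hj
      have h1 : 2 < ((j : ℝ) + 1) * coneFn n c x := by
        rw [← div_lt_iff₀ hτ]
        have : (J : ℝ) ≤ j := by exact_mod_cast hj
        linarith
      rw [hFin j x hx, hG, indicator_of_mem hx, Real.smoothTransition.one_of_one_le (by linarith),
        deriv_smoothTransition_eq_zero (Or.inr (by linarith))]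
      ring
    · rw [hG, indicator_of_notMem hx]
      simp only [hFout _ x hx]
      exact tendsto_const_nhds
  set D : V n → ℝ := (Metric.closedBall (0 : V n) R).indicator fun _ => |L| + 2 * M * K with hD
  have hDint : Integrable D := by
    refine (integrableOn_const ?_).integrable_indicator Metric.isClosed_closedBall.measurableSet
    exact (isCompact_closedBall (0 : V n) R).measure_lt_top.ne
  have hbound : ∀ (j : ℕ) (x : V n), ‖F j x‖ ≤ D x := by
    intro j x
    have hD0 : 0 ≤ D x := indicator_nonneg (fun _ _ => by positivity) x
    by_cases hx : x ∈ Ω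
    · rw [hFin j x hx]
      by_cases hb0 : b (‖x‖ ^ 2) = 0
      · simpa [hb0] using hD0
      obtain ⟨h1, h2⟩ := hball x hb0
      rw [hD, indicator_of_mem (by rwa [mem_closedBall_zero_iff])]
      have hτ := mem_openConeSet_iff.1 hx
      have e1 : |b (‖x‖ ^ 2)| ≤ 1 := by rw [abs_of_nonneg b.nonneg]; exact b.le_one
      have e2 : |Real.smoothTransition ((j + 1) * coneFn n c x - 1)| ≤ 1 := by
        rw [abs_of_nonneg (Real.smoothTransition.nonneg _)]; exact Real.smoothTransition.le_one _
      have e3 : |((j : ℝ) + 1) * deriv Real.smoothTransition ((j + 1) * coneFn n c x - 1)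
          * Z (Fin.last n) x| ≤ 2 * M * K := by
        by_cases hbig : 1 < ((j : ℝ) + 1) * coneFn n c x - 1
        · rw [deriv_smoothTransition_eq_zero (Or.inr hbig)]
          simp only [mul_zero, zero_mul, abs_zero]
          positivity
        · rw [abs_mul, abs_mul, abs_of_pos (hj0 j)]
          have hz := hK x hx h1 h2
          calc ((j : ℝ) + 1) * |deriv Real.smoothTransition ((j + 1) * coneFn n c x - 1)|
                * |Z (Fin.last n) x|
              ≤ ((j : ℝ) + 1) * M * (K * coneFn n c x) := by
                gcongr
                · exact hM _
            _ = M * K * (((j : ℝ) + 1) * coneFn n c x) := by ring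
            _ ≤ M * K * 2 := by
                gcongr
                linarith
            _ = _ := by ring
      refine (norm_add_le _ _).trans (add_le_add ?_ ?_)
      · rw [norm_mul, norm_mul, Real.norm_eq_abs, Real.norm_eq_abs, Real.norm_eq_abs]
        calc _ ≤ 1 * 1 * |L| :=
              mul_le_mul (mul_le_mul e1 e2 (abs_nonneg _) zero_le_one)
                ((hL x hx h1 h2).trans (le_abs_self L)) (abs_nonneg _) (by norm_num)
          _ = _ := by ring
      · rw [mul_assoc, norm_mul, Real.norm_eq_abs, Real.norm_eq_abs]
        calc _ ≤ 1 * (2 * M * K) := by gcongr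
          _ = _ := one_mul _
    · rw [hFout j x hx, norm_zero]
      exact hD0
  have hGm : AEStronglyMeasurable G volume :=
    aestronglyMeasurable_of_tendsto_ae atTop (fun j => (hFc j).aestronglyMeasurable)
      (Eventually.of_forall hlim)
  have hGint : Integrable G := hDint.mono' hGm (Eventually.of_forall fun x =>
    le_of_tendsto' (hlim x).norm fun j => hbound j x)
  have hG0 : ∫ x, G x = 0 := by
    have h1 := tendsto_integral_of_dominated_convergence D
      (fun j => (hFc j).aestronglyMeasurable) hDint
      (fun j => Eventually.of_forall (hbound j)) (Eventually.of_forall hlim)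
    simp only [hFint] at h1
    exact tendsto_nhds_unique h1 tendsto_const_nhds
  have hGnn : 0 ≤ G := fun x => indicator_nonneg (fun x hx => mul_nonneg b.nonneg (hdiv x hx)) x
  have hGae := (integral_eq_zero_iff_of_nonneg hGnn hGint).1 hG0
  by_contra hne
  have hpos : 0 < divg n Z x₀ := lt_of_le_of_ne (hdiv x₀ hx₀) (Ne.symm hne)
  have hnhds : {x | G x ≠ 0} ∈ 𝓝 x₀ := by
    have h1 : ∀ᶠ x in 𝓝 x₀, x ∈ Ω := (isOpen_openConeSet c).mem_nhds hx₀
    have h2 : ∀ᶠ x in 𝓝 x₀, 0 < divg n Z x :=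
      continuousAt_const.eventually_lt (hdivc.continuousAt (hU.mem_nhds (hΩU hx₀))) hpos
    have h3 : ∀ᶠ x : V n in 𝓝 x₀, ‖x‖ ^ 2 ∈ Metric.ball ρ b.rOut :=
      (continuous_norm.pow 2).continuousAt.preimage_mem_nhds
        (Metric.ball_mem_nhds _ b.rOut_pos)
    filter_upwards [h1, h2, h3] with x hx1 hx2 hx3
    rw [← b.support_eq] at hx3
    rw [hG]
    simp only [indicator_of_mem hx1]
    exact mul_ne_zero hx3 hx2.ne'
  exact (Measure.measure_pos_of_mem_nhds volume hnhds).ne' (ae_iff.1 hGae)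

end ConeDivergence

section CapillaryGeometry

open Topology Filter

variable {n : ℕ} {c : ℝ}

lemma last_pos_of_mem (hc : c ∈ Ioo (0 : ℝ) 1) {x : V n} (hx : x ∈ closedConeSet n c) :
    0 < x (Fin.last n) :=
  lt_of_lt_of_le (mul_pos hc.1 (norm_pos_iff.2 hx.1)) hx.2

lemma convex_closedConeSet (hc : c ∈ Ioo (0 : ℝ) 1) : Convex ℝ (closedConeSet n c) := by
  intro x hx y hy a b ha hb hab
  refine ⟨fun h => ?_, convex_coneSet hc.1.le hx.2 hy.2 ha hb hab⟩
  have h1 : a * x (Fin.last n) + b * y (Fin.last n) = 0 :=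
    congrArg (fun z : V n => z (Fin.last n)) h
  have hx1 := last_pos_of_mem hc hx
  have hy1 := last_pos_of_mem hc hy
  rcases ha.eq_or_lt with rfl | ha
  · have : b = 1 := by linarith
    subst this
    linarith
  · have := mul_pos ha hx1
    have := mul_nonneg hb hy1.le
    linarith

lemma smul_mem_closedConeSet {x : V n} (hx : x ∈ closedConeSet n c) {l : ℝ} (hl : 0 < l) :
    l • x ∈ closedConeSet n c := by
  refine ⟨smul_ne_zero hl.ne' hx.1, ?_⟩
  have h : (l • x) (Fin.last n) = l * x (Fin.last n) := rfl
  rw [h, norm_smul, Real.norm_of_nonneg hl.le]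
  nlinarith [mul_le_mul_of_nonneg_left hx.2 hl.le]

lemma Etop_mem_openConeSet (hc : c ∈ Ioo (0 : ℝ) 1) : Etop n ∈ openConeSet n c := by
  change c * ‖Etop n‖ < Etop n (Fin.last n)
  rw [norm_Etop, Etop_last, mul_one]
  exact hc.2

lemma closedConeSet_subset_closure (hc : c ∈ Ioo (0 : ℝ) 1) :
    closedConeSet n c ⊆ closure (openConeSet n c) := by
  intro x hx
  have h1 : Tendsto (fun j : ℕ => x + (1 / ((j : ℝ) + 1)) • Etop n) atTop (𝓝 x) := by
    simpa using tendsto_const_nhds.add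
      ((tendsto_one_div_add_atTop_nhds_zero_nat (𝕜 := ℝ)).smul_const (Etop n))
  exact mem_closure_of_tendsto h1
    (Eventually.of_forall fun j => add_smul_mem_openConeSet hc hx.2 (by positivity))

lemma eqOn_closedConeSet (hc : c ∈ Ioo (0 : ℝ) 1) {Y : Type*} [TopologicalSpace Y] [T2Space Y]
    {f g : V n → Y} (hf : ContinuousOn f (closedConeSet n c))
    (hg : ContinuousOn g (closedConeSet n c)) (h : EqOn f g (openConeSet n c)) :
    EqOn f g (closedConeSet n c) :=
  h.of_subset_closure hf hg (openConeSet_subset c) (closedConeSet_subset_closure hc)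

/-- A `C³`, positively `1`-homogeneous function on the cone whose vertical derivative vanishes on
the boundary. -/
structure IsConeFn (n : ℕ) (c : ℝ) (U : Set (V n)) (G : V n → ℝ) : Prop where
  isOpen : IsOpen U
  subset : closedConeSet n c ⊆ U
  smooth : ContDiffOn ℝ 3 G U
  homog : ∀ l : ℝ, 0 < l → ∀ x ∈ closedConeSet n c, G (l • x) = l * G x
  bdry : ∀ x ∈ closedConeSet n c, x (Fin.last n) = c * ‖x‖ → fderiv ℝ G x (Etop n) = 0

lemma contDiffOn_fderiv_apply {U : Set (V n)} (hU : IsOpen U) {G : V n → ℝ}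
    {m m' : WithTop ℕ∞} (hG : ContDiffOn ℝ m G U) (hm : m' + 1 ≤ m) (v : V n) :
    ContDiffOn ℝ m' (fun x => fderiv ℝ G x v) U :=
  (hG.fderiv_of_isOpen hU hm).clm_apply contDiffOn_const

lemma contDiffOn_fderiv_fderiv_apply {U : Set (V n)} (hU : IsOpen U) {G : V n → ℝ}
    (hG : ContDiffOn ℝ 3 G U) (v w : V n) :
    ContDiffOn ℝ 1 (fun x => fderiv ℝ (fderiv ℝ G) x v w) U :=
  (((hG.fderiv_of_isOpen (m := 2) hU (by norm_num)).fderiv_of_isOpen (m := 1) hU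
    (by norm_num)).clm_apply contDiffOn_const).clm_apply contDiffOn_const

lemma fderiv_smul_of_homog (hc : c ∈ Ioo (0 : ℝ) 1) {U : Set (V n)} (hU : IsOpen U)
    (hsub : closedConeSet n c ⊆ U) {F : Type*} [NormedAddCommGroup F] [NormedSpace ℝ F]
    {G : V n → F} (hG : ContDiffOn ℝ 1 G U) {l α : ℝ} (hl : 0 < l)
    (h : ∀ x ∈ closedConeSet n c, G (l • x) = α • G x) {x : V n} (hx : x ∈ closedConeSet n c) :
    l • fderiv ℝ G (l • x) = α • fderiv ℝ G x := by
  have hcont := hG.continuousOn_fderiv_of_isOpen hU le_rfl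
  have hd : ∀ y ∈ closedConeSet n c, DifferentiableAt ℝ G y := fun y hy =>
    (hG.differentiableOn one_ne_zero).differentiableAt (hU.mem_nhds (hsub hy))
  refine eqOn_closedConeSet hc (f := fun x => l • fderiv ℝ G (l • x))
    (g := fun x => α • fderiv ℝ G x) ?_ ?_ ?_ hx
  · refine ContinuousOn.const_smul (hcont.comp (continuous_const_smul l).continuousOn ?_) l
    exact fun y hy => hsub (smul_mem_closedConeSet hy hl)
  · exact (hcont.mono hsub).const_smul α
  · intro y hy
    have hy' := openConeSet_subset c hy
    have e1 : HasFDerivAt (fun z => G (l • z))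
        ((fderiv ℝ G (l • y)).comp (l • ContinuousLinearMap.id ℝ (V n))) y :=
      (hd _ (smul_mem_closedConeSet hy' hl)).hasFDerivAt.comp y
        ((hasFDerivAt_id y).const_smul l)
    have e2 : HasFDerivAt (fun z => G (l • z)) (α • fderiv ℝ G y) y := by
      refine ((hd y hy').hasFDerivAt.const_smul α).congr_of_eventuallyEq ?_
      filter_upwards [(isOpen_openConeSet c).mem_nhds hy] with z hz
      exact h z (openConeSet_subset c hz)
    have := e1.unique e2
    simpa using this

lemma fderiv_self_of_homog {U : Set (V n)} (hU : IsOpen U)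
    (hsub : closedConeSet n c ⊆ U) {F : Type*} [NormedAddCommGroup F] [NormedSpace ℝ F]
    {G : V n → F} (hG : ContDiffOn ℝ 1 G U) {φ : ℝ → ℝ} {φ' : ℝ} (hφ : HasDerivAt φ φ' 1)
    (h : ∀ l : ℝ, 0 < l → ∀ x ∈ closedConeSet n c, G (l • x) = φ l • G x) {x : V n}
    (hx : x ∈ closedConeSet n c) : fderiv ℝ G x x = φ' • G x := by
  have hd : DifferentiableAt ℝ G ((1 : ℝ) • x) := by
    rw [one_smul]
    exact (hG.differentiableOn one_ne_zero).differentiableAt (hU.mem_nhds (hsub hx))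
  have e1 := hd.hasFDerivAt.comp_hasDerivAt (1 : ℝ) ((hasDerivAt_id (1 : ℝ)).smul_const x)
  have e2 : HasDerivAt (G ∘ fun l : ℝ => id l • x) (φ' • G x) 1 := by
    refine (hφ.smul_const (G x)).congr_of_eventuallyEq ?_
    filter_upwards [lt_mem_nhds one_pos] with l hl
    exact h l hl x hx
  simpa using e1.unique e2

namespace IsConeFn

variable {U : Set (V n)} {G G₁ G₂ : V n → ℝ}

lemma mono (h : IsConeFn n c U G) {W : Set (V n)} (hW : IsOpen W) (hsub : closedConeSet n c ⊆ W)
    (hWU : W ⊆ U) : IsConeFn n c W G :=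
  ⟨hW, hsub, h.smooth.mono hWU, h.homog, h.bdry⟩

lemma differentiableAt (h : IsConeFn n c U G) {x : V n} (hx : x ∈ U) :
    DifferentiableAt ℝ G x :=
  (h.smooth.differentiableOn (by norm_num)).differentiableAt (h.isOpen.mem_nhds hx)

lemma contDiffOn_fderiv (h : IsConeFn n c U G) : ContDiffOn ℝ 2 (fderiv ℝ G) U :=
  h.smooth.fderiv_of_isOpen h.isOpen (by norm_num)

lemma differentiableAt_fderiv (h : IsConeFn n c U G) {x : V n} (hx : x ∈ U) :
    DifferentiableAt ℝ (fderiv ℝ G) x :=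
  (h.contDiffOn_fderiv.differentiableOn (by norm_num)).differentiableAt (h.isOpen.mem_nhds hx)

lemma hasFDerivAt_fderiv_apply (h : IsConeFn n c U G) {x : V n} (hx : x ∈ U) (v : V n) :
    HasFDerivAt (fun y => fderiv ℝ G y v) ((fderiv ℝ (fderiv ℝ G) x).flip v) x := by
  simpa using (h.differentiableAt_fderiv hx).hasFDerivAt.clm_apply (hasFDerivAt_const v x)

lemma fderiv_smul (h : IsConeFn n c U G) (hc : c ∈ Ioo (0 : ℝ) 1) {l : ℝ} (hl : 0 < l) {x : V n}
    (hx : x ∈ closedConeSet n c) : fderiv ℝ G (l • x) = fderiv ℝ G x := by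
  have := fderiv_smul_of_homog hc h.isOpen h.subset (h.smooth.of_le (by norm_num)) hl
    (h.homog l hl) hx
  exact smul_right_injective _ hl.ne' this

lemma hess_smul (h : IsConeFn n c U G) (hc : c ∈ Ioo (0 : ℝ) 1) {l : ℝ} (hl : 0 < l) {x : V n}
    (hx : x ∈ closedConeSet n c) :
    l • fderiv ℝ (fderiv ℝ G) (l • x) = fderiv ℝ (fderiv ℝ G) x := by
  have := fderiv_smul_of_homog hc h.isOpen h.subset (h.contDiffOn_fderiv.of_le (by norm_num)) hl
    (α := 1) (fun y hy => by rw [one_smul, h.fderiv_smul hc hl hy]) hx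
  rwa [one_smul] at this

lemma fderiv_self (h : IsConeFn n c U G) {x : V n} (hx : x ∈ closedConeSet n c) :
    fderiv ℝ G x x = G x := by
  have := fderiv_self_of_homog h.isOpen h.subset (h.smooth.of_le (by norm_num))
    (hasDerivAt_id (1 : ℝ)) h.homog hx
  rwa [one_smul] at this

lemma hess_self (h : IsConeFn n c U G) (hc : c ∈ Ioo (0 : ℝ) 1) {x : V n}
    (hx : x ∈ closedConeSet n c) : fderiv ℝ (fderiv ℝ G) x x = 0 := by
  have := fderiv_self_of_homog h.isOpen h.subset (h.contDiffOn_fderiv.of_le (by norm_num))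
    (hasDerivAt_const (1 : ℝ) (1 : ℝ))
    (fun l hl y hy => by rw [one_smul, h.fderiv_smul hc hl hy]) hx
  rwa [zero_smul] at this

lemma hess_symm (h : IsConeFn n c U G) {x : V n} (hx : x ∈ U) (v w : V n) :
    fderiv ℝ (fderiv ℝ G) x v w = fderiv ℝ (fderiv ℝ G) x w v :=
  ((h.smooth.contDiffAt (h.isOpen.mem_nhds hx)).isSymmSndFDerivAt (by simp; norm_num)).eq v w

/-- At the boundary of the cone the Hessian has no mixed component. -/
lemma hess_bdry (h : IsConeFn n c U G) (hc : c ∈ Ioo (0 : ℝ) 1) {x : V n}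
    (hx : x ∈ closedConeSet n c) (hxb : x (Fin.last n) = c * ‖x‖) {v : V n}
    (hv : v (Fin.last n) = 0) (hvx : ⟪v, x⟫ = 0) :
    fderiv ℝ (fderiv ℝ G) x v (Etop n) = 0 := by
  have hN : 0 < ‖x‖ := norm_pos_iff.2 hx.1
  have hden : 0 < ‖x‖ ^ 2 - x (Fin.last n) ^ 2 := by
    rw [hxb]
    have : c ^ 2 < 1 := by nlinarith [hc.1, hc.2]
    nlinarith [mul_pos hN hN]
  set a : ℝ := ‖v‖ ^ 2 / (‖x‖ ^ 2 - x (Fin.last n) ^ 2) with ha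
  have ha' : a * (‖x‖ ^ 2 - x (Fin.last n) ^ 2) = ‖v‖ ^ 2 := by
    rw [ha]; field_simp
  have ha0 : 0 ≤ a := by positivity
  set γ : ℝ → V n := fun t => (1 - a * t ^ 2) • x + (2 * t) • v
    + (2 * a * t ^ 2 * x (Fin.last n)) • Etop n with hγ
  have hγ0 : γ 0 = x := by simp [hγ]
  have hxE : ⟪x, Etop n⟫ = x (Fin.last n) := inner_single x _
  have hvE : ⟪v, Etop n⟫ = 0 := by rw [Etop, inner_single, hv]
  have hγl : ∀ t, γ t (Fin.last n) = (1 + a * t ^ 2) * x (Fin.last n) := by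
    intro t
    simp only [hγ, PiLp.add_apply, PiLp.smul_apply, smul_eq_mul, hv, Etop_last]
    ring
  have hγn : ∀ t, ‖γ t‖ = (1 + a * t ^ 2) * ‖x‖ := by
    intro t
    have h1 : ‖γ t‖ ^ 2 = ((1 + a * t ^ 2) * ‖x‖) ^ 2 := by
      simp only [hγ]
      rw [norm_add_sq_real, norm_add_sq_real, inner_add_left]
      simp only [inner_smul_left, inner_smul_right, norm_smul, norm_Etop, mul_pow, hxE, hvE,
        Real.norm_eq_abs, sq_abs, conj_trivial]
      rw [real_inner_comm, hvx]
      linear_combination (-4 * t ^ 2) * ha'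
    exact (sq_eq_sq₀ (norm_nonneg _) (by positivity)).1 h1
  have hγd : HasDerivAt γ ((2 : ℝ) • v) 0 := by
    have e1 : HasDerivAt (fun t : ℝ => 1 - a * t ^ 2) 0 0 := by
      simpa using ((hasDerivAt_pow 2 (0 : ℝ)).const_mul a).const_sub 1
    have e2 : HasDerivAt (fun t : ℝ => 2 * t) 2 0 := by
      simpa using (hasDerivAt_id (0 : ℝ)).const_mul 2
    have e3 : HasDerivAt (fun t : ℝ => 2 * a * t ^ 2 * x (Fin.last n)) 0 0 := by
      simpa using ((hasDerivAt_pow 2 (0 : ℝ)).const_mul (2 * a)).mul_const (x (Fin.last n))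
    have e4 := ((e1.smul_const x).add (e2.smul_const v)).add (e3.smul_const (Etop n))
    rw [zero_smul, zero_smul, zero_add, add_zero] at e4
    exact e4
  have hz : ∀ t, fderiv ℝ G (γ t) (Etop n) = 0 := by
    intro t
    have h1 : 0 < 1 + a * t ^ 2 := by positivity
    refine h.bdry _ ⟨?_, ?_⟩ ?_
    · rw [← norm_pos_iff, hγn]; positivity
    · rw [hγl, hγn, hxb]; linarith
    · rw [hγl, hγn, hxb]; ring
  have hF : HasFDerivAt (fun y => fderiv ℝ G y (Etop n))
      ((fderiv ℝ (fderiv ℝ G) (γ 0)).flip (Etop n)) (γ 0) := by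
    rw [hγ0]
    exact h.hasFDerivAt_fderiv_apply (h.subset hx) _
  have h1 := hF.comp_hasDerivAt (0 : ℝ) hγd
  have h2 : HasDerivAt ((fun y => fderiv ℝ G y (Etop n)) ∘ γ) 0 0 := by
    have : ((fun y => fderiv ℝ G y (Etop n)) ∘ γ) = fun _ => 0 := funext hz
    rw [this]
    exact hasDerivAt_const _ _
  have h3 := h1.unique h2
  rw [hγ0, map_smul] at h3
  simpa using h3

lemma sub (h₁ : IsConeFn n c U G₁) (h₂ : IsConeFn n c U G₂) :
    IsConeFn n c U (fun x => G₁ x - G₂ x) := by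
  refine ⟨h₁.isOpen, h₁.subset, h₁.smooth.sub h₂.smooth, fun l hl x hx => ?_, fun x hx hxb => ?_⟩
  · rw [h₁.homog l hl x hx, h₂.homog l hl x hx]
    ring
  · rw [fderiv_fun_sub (h₁.differentiableAt (h₁.subset hx)) (h₂.differentiableAt (h₁.subset hx)),
      sub_apply, h₁.bdry x hx hxb, h₂.bdry x hx hxb, sub_zero]

lemma inner_left (hU : IsOpen U) (hsub : closedConeSet n c ⊆ U) {a : V n}
    (ha : a (Fin.last n) = 0) : IsConeFn n c U (fun x => ⟪a, x⟫) := by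
  refine ⟨hU, hsub, (innerSL ℝ a).contDiff.contDiffOn, fun l _ x _ => inner_smul_right _ _ _,
    fun x _ _ => ?_⟩
  have : fderiv ℝ (fun x : V n => ⟪a, x⟫) x = innerSL ℝ a := (innerSL ℝ a).fderiv
  rw [this, innerSL_apply_apply, Etop, inner_single, ha]

lemma fderiv_sub_inner (h : IsConeFn n c U G) (a : V n) {x : V n} (hx : x ∈ U) :
    fderiv ℝ (fun x => G x - ⟪a, x⟫) x = fderiv ℝ G x - innerSL ℝ a :=
  ((h.differentiableAt hx).hasFDerivAt.sub (innerSL ℝ a).hasFDerivAt).fderiv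

lemma hess_sub (h₁ : IsConeFn n c U G₁) (h₂ : IsConeFn n c U G₂) {x : V n} (hx : x ∈ U) :
    fderiv ℝ (fderiv ℝ fun x => G₁ x - G₂ x) x
      = fderiv ℝ (fderiv ℝ G₁) x - fderiv ℝ (fderiv ℝ G₂) x := by
  have : fderiv ℝ (fun x => G₁ x - G₂ x) =ᶠ[𝓝 x] fun y => fderiv ℝ G₁ y - fderiv ℝ G₂ y := by
    filter_upwards [h₁.isOpen.mem_nhds hx] with y hy
    exact fderiv_fun_sub (h₁.differentiableAt hy) (h₂.differentiableAt hy)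
  rw [this.fderiv_eq]
  exact fderiv_fun_sub (h₁.differentiableAt_fderiv hx) (h₂.differentiableAt_fderiv hx)

lemma hess_sub_inner (h : IsConeFn n c U G) (a : V n) {x : V n} (hx : x ∈ U) :
    fderiv ℝ (fderiv ℝ fun x => G x - ⟪a, x⟫) x = fderiv ℝ (fderiv ℝ G) x := by
  have : fderiv ℝ (fun x => G x - ⟪a, x⟫) =ᶠ[𝓝 x] fun y => fderiv ℝ G y - innerSL ℝ a := by
    filter_upwards [h.isOpen.mem_nhds hx] with y hy
    exact h.fderiv_sub_inner a hy
  rw [this.fderiv_eq, fderiv_sub_const]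

/-- Second-order expansion along a segment in the cone. -/
lemma exists_expansion (h : IsConeFn n c U G) (hc : c ∈ Ioo (0 : ℝ) 1) {x y : V n}
    (hx : x ∈ closedConeSet n c) (hy : y ∈ closedConeSet n c) :
    ∃ t ∈ Ioo (0 : ℝ) 1, ∃ s ∈ Ioo (0 : ℝ) 1, G y = fderiv ℝ G x y
      + s * fderiv ℝ (fderiv ℝ G) (x + t • (y - x)) (y - x) (y - x) := by
  have hmem : ∀ t ∈ Icc (0 : ℝ) 1, x + t • (y - x) ∈ closedConeSet n c := fun t ht =>
    (convex_closedConeSet hc).add_smul_sub_mem hx hy ht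
  have hline : ∀ t : ℝ, HasDerivAt (fun t : ℝ => x + t • (y - x)) (y - x) t := fun t => by
    simpa using ((hasDerivAt_id t).smul_const (y - x)).const_add x
  have d1 : ∀ t ∈ Icc (0 : ℝ) 1, HasDerivAt (fun t : ℝ => G (x + t • (y - x)))
      (fderiv ℝ G (x + t • (y - x)) (y - x)) t := fun t ht =>
    (h.differentiableAt (h.subset (hmem t ht))).hasFDerivAt.comp_hasDerivAt t (hline t)
  have d2 : ∀ t ∈ Icc (0 : ℝ) 1, HasDerivAt (fun t : ℝ => fderiv ℝ G (x + t • (y - x)) (y - x))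
      (fderiv ℝ (fderiv ℝ G) (x + t • (y - x)) (y - x) (y - x)) t := fun t ht => by
    have h1 := h.hasFDerivAt_fderiv_apply (h.subset (hmem t ht)) (y - x)
    exact h1.comp_hasDerivAt t (hline t)
  obtain ⟨s, hs, hs'⟩ := exists_hasDerivAt_eq_slope _ _ one_pos
    (fun t ht => (d1 t ht).continuousAt.continuousWithinAt)
    (fun t ht => d1 t (Ioo_subset_Icc_self ht))
  have hsub : Icc 0 s ⊆ Icc (0 : ℝ) 1 := Icc_subset_Icc_right hs.2.le
  obtain ⟨t, ht, ht'⟩ := exists_hasDerivAt_eq_slope _ _ hs.1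
    (fun t ht => (d2 t (hsub ht)).continuousAt.continuousWithinAt)
    (fun t ht => d2 t (hsub (Ioo_subset_Icc_self ht)))
  refine ⟨t, ⟨ht.1, ht.2.trans hs.2⟩, s, hs, ?_⟩
  have hs0 := hs.1.ne'
  rw [eq_div_iff (by simpa using hs0)] at ht'
  simp only [sub_zero, zero_smul, add_zero, one_smul, div_one, add_sub_cancel] at hs' ht'
  have h1 : fderiv ℝ G x (y - x) = fderiv ℝ G x y - G x := by rw [map_sub, h.fderiv_self hx]
  rw [hs', h1] at ht'
  linarith

end IsConeFn

end CapillaryGeometry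

section HessianFields

open Topology Filter Matrix

variable {n : ℕ} {c : ℝ} {U : Set (V n)} {G G₁ G₂ : V n → ℝ}

/-- The Hessian is positive semidefinite, and definite transversally to the radial direction. -/
def HasPosHess (n : ℕ) (c : ℝ) (G : V n → ℝ) : Prop :=
  ∀ x ∈ closedConeSet n c, (∀ v : V n, 0 ≤ fderiv ℝ (fderiv ℝ G) x v v) ∧
    ∀ v : V n, v ≠ 0 → ⟪v, x⟫ = 0 → 0 < fderiv ℝ (fderiv ℝ G) x v v

lemma exists_bdry_point (hc : c ∈ Ioo (0 : ℝ) 1) (hn : 1 ≤ n) :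
    ∃ x ∈ closedConeSet n c, ‖x‖ = 1 ∧ x (Fin.last n) = c ∧ x 0 = Real.sqrt (1 - c ^ 2) := by
  have h0 : (0 : Fin (n + 1)) ≠ Fin.last n := by
    rw [Ne, Fin.ext_iff]; simp; omega
  have hs : 0 < 1 - c ^ 2 := by nlinarith [hc.1, hc.2]
  set s := Real.sqrt (1 - c ^ 2) with hsdef
  have hs0 : 0 < s := Real.sqrt_pos.2 hs
  set x : V n := c • Etop n + s • EuclideanSpace.single 0 (1 : ℝ) with hx
  have hxl : x (Fin.last n) = c := by
    simp [hx, h0.symm]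
  have hx0 : x 0 = s := by simp [hx, Etop, h0]
  have hxn : ‖x‖ = 1 := by
    have : ‖x‖ ^ 2 = 1 := by
      rw [hx, norm_add_sq_real, real_inner_smul_left, real_inner_smul_right, inner_single,
        norm_smul, norm_smul, norm_Etop, mul_pow, mul_pow, Real.norm_eq_abs, Real.norm_eq_abs,
        sq_abs, sq_abs, hsdef, Real.sq_sqrt hs.le]
      simp [Etop, h0]
    nlinarith [norm_nonneg x]
  have hxm : x ∈ closedConeSet n c := by
    refine ⟨?_, by rw [hxn, hxl, mul_one]⟩
    rw [← norm_pos_iff, hxn]; exact one_pos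
  exact ⟨x, hxm, hxn, hxl, hx0⟩

namespace IsConeFn

lemma hess_pos_of_ne_smul (h : IsConeFn n c U G) (hc : c ∈ Ioo (0 : ℝ) 1) (hG : HasPosHess n c G)
    {x v : V n} (hx : x ∈ closedConeSet n c) (hv : ∀ l : ℝ, v ≠ l • x) :
    0 < fderiv ℝ (fderiv ℝ G) x v v := by
  set l := ⟪v, x⟫ / ‖x‖ ^ 2 with hl
  have hN : ‖x‖ ≠ 0 := norm_ne_zero_iff.2 hx.1
  have h1 : ⟪v - l • x, x⟫ = 0 := by
    rw [inner_sub_left, real_inner_smul_left, real_inner_self_eq_norm_sq, hl]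
    field_simp
    ring
  have h2 := (hG x hx).2 (v - l • x) (sub_ne_zero.2 (hv l)) h1
  have h3 : ∀ w, fderiv ℝ (fderiv ℝ G) x x w = 0 := fun w => by rw [h.hess_self hc hx]; rfl
  have h4 : ∀ w, fderiv ℝ (fderiv ℝ G) x w x = 0 := fun w => by
    rw [h.hess_symm (h.subset hx), h3]
  simpa [map_sub, h3, h4] using h2

lemma apply_Etop_pos (h : IsConeFn n c U G) (hc : c ∈ Ioo (0 : ℝ) 1) (hn : 1 ≤ n)
    (hG : HasPosHess n c G) : 0 < G (Etop n) := by
  have h0 : (0 : Fin (n + 1)) ≠ Fin.last n := by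
    rw [Ne, Fin.ext_iff]; simp; omega
  obtain ⟨x, hxm, hxn, hxl, hx0⟩ := exists_bdry_point hc hn
  set s := Real.sqrt (1 - c ^ 2) with hsdef
  have hs0 : 0 < s := Real.sqrt_pos.2 (by nlinarith [hc.1, hc.2])
  have hE := openConeSet_subset c (Etop_mem_openConeSet (n := n) hc)
  obtain ⟨t, ht, r, hr, hexp⟩ := h.exists_expansion hc hxm hE
  rw [h.bdry x hxm (by rw [hxn, hxl, mul_one]), zero_add] at hexp
  rw [hexp]
  refine mul_pos hr.1 (h.hess_pos_of_ne_smul hc hG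
    ((convex_closedConeSet hc).add_smul_sub_mem hxm hE ⟨ht.1.le, ht.2.le⟩) fun l hl => ?_)
  have e1 := congrArg (fun z : V n => z (Fin.last n)) hl
  have e2 := congrArg (fun z : V n => z 0) hl
  simp only [PiLp.add_apply, PiLp.sub_apply, PiLp.smul_apply, smul_eq_mul, Etop_last, hxl,
    hx0] at e1 e2
  have hE0 : Etop n 0 = 0 := by simp [Etop, h0]
  rw [hE0] at e2
  have e3 : l * (1 - t) = -1 := by
    have : s * (l * (1 - t) + 1) = 0 := by linear_combination -e2
    rcases mul_eq_zero.1 this with h | h <;> linarith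
  have e4 : l = 0 := by linear_combination -e1 + (1 - c) * e3
  rw [e4] at e3
  norm_num at e3

lemma exists_translate_pos (h : IsConeFn n c U G) (hc : c ∈ Ioo (0 : ℝ) 1) (hn : 1 ≤ n)
    (hG : HasPosHess n c G) :
    ∃ a : V n, a (Fin.last n) = 0 ∧ ∀ x ∈ openConeSet n c, 0 < G x - ⟪a, x⟫ := by
  have hE := openConeSet_subset c (Etop_mem_openConeSet (n := n) hc)
  set g : V n := (InnerProductSpace.toDual ℝ (V n)).symm (fderiv ℝ G (Etop n)) with hg
  have hgv : ∀ v, ⟪g, v⟫ = fderiv ℝ G (Etop n) v := fun v => by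
    rw [hg, InnerProductSpace.toDual_symm_apply]
  have hgl : g (Fin.last n) = G (Etop n) := by
    rw [← inner_single, hgv]
    exact h.fderiv_self hE
  refine ⟨g - g (Fin.last n) • Etop n, by simp, fun x hx => ?_⟩
  have hx' := openConeSet_subset c hx
  obtain ⟨t, ht, r, hr, hexp⟩ := h.exists_expansion hc hE hx'
  have h1 := ((hG _ ((convex_closedConeSet hc).add_smul_sub_mem hE hx' ⟨ht.1.le, ht.2.le⟩)).1
    (x - Etop n))
  have h2 : ⟪Etop n, x⟫ = x (Fin.last n) := by rw [real_inner_comm, Etop, inner_single]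
  rw [inner_sub_left, real_inner_smul_left, hgv, h2, hgl]
  have h3 := mul_pos (h.apply_Etop_pos hc hn hG) (last_pos_of_mem hc hx')
  have h4 := mul_nonneg hr.1.le h1
  linarith

lemma hessM_mulVec (x v : V n) (i : Fin (n + 1)) :
    (hessM n G x *ᵥ v) i = fderiv ℝ (fderiv ℝ G) x (EuclideanSpace.single i 1) v := by
  have hv : v = ∑ j, v j • EuclideanSpace.single j (1 : ℝ) := by
    have := (EuclideanSpace.basisFun (Fin (n + 1)) ℝ).sum_repr v
    simpa using this.symm
  conv_rhs => rw [hv]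
  rw [map_sum]
  unfold Matrix.mulVec dotProduct
  refine Finset.sum_congr rfl fun j _ => ?_
  rw [map_smul, smul_eq_mul, mul_comm]
  rfl

lemma dotProduct_hessM_mulVec (x v w : V n) :
    (w : Fin (n + 1) → ℝ) ⬝ᵥ (hessM n G x *ᵥ v) = fderiv ℝ (fderiv ℝ G) x w v := by
  have hw : w = ∑ j, w j • EuclideanSpace.single j (1 : ℝ) := by
    have := (EuclideanSpace.basisFun (Fin (n + 1)) ℝ).sum_repr w
    simpa using this.symm
  conv_rhs => rw [hw]
  rw [map_sum, _root_.sum_apply]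
  refine Finset.sum_congr rfl fun j _ => ?_
  rw [map_smul, _root_.smul_apply, smul_eq_mul, hessM_mulVec]

lemma hessM_symm (h : IsConeFn n c U G) {x : V n} (hx : x ∈ U) (i j : Fin (n + 1)) :
    hessM n G x i j = hessM n G x j i := h.hess_symm hx _ _

lemma posSemidef_hessM (h : IsConeFn n c U G) (hG : HasPosHess n c G) {x : V n}
    (hx : x ∈ closedConeSet n c) : (hessM n G x).PosSemidef := by
  refine PosSemidef.of_dotProduct_mulVec_nonneg ?_ fun v => ?_
  · ext i j
    exact h.hessM_symm (h.subset hx) j i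
  · have := dotProduct_hessM_mulVec (G := G) x (WithLp.toLp 2 v) (WithLp.toLp 2 v)
    simp only [star_trivial]
    rw [this]
    exact (hG x hx).1 _

lemma sigP_hessM_pos (h : IsConeFn n c U G) (hG : HasPosHess n c G) {x : V n}
    (hx : x ∈ closedConeSet n c) {k : ℕ} (hk : k ≤ n) : 0 < sigP (hessM n G x) k := by
  refine sigP_pos (h.posSemidef_hessM hG hx) x (fun v hv hvx => ?_) (by simpa using hk)
  have := dotProduct_hessM_mulVec (G := G) x (WithLp.toLp 2 v) (WithLp.toLp 2 v)
  rw [this]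
  refine (hG x hx).2 _ (fun h0 => hv ?_) ?_
  · simpa using congrArg (WithLp.ofLp) h0
  · rw [EuclideanSpace.inner_eq_star_dotProduct]
    simpa [dotProduct_comm] using hvx

lemma contDiffOn_hessM (h : IsConeFn n c U G) (i j : Fin (n + 1)) :
    ContDiffOn ℝ 1 (fun x => hessM n G x i j) U :=
  contDiffOn_fderiv_fderiv_apply h.isOpen h.smooth _ _

lemma contDiffOn_sigP (h : IsConeFn n c U G) (m : ℕ) :
    ContDiffOn ℝ 1 (fun x => sigP (hessM n G x) m) U := by
  unfold sigP
  refine ContDiffOn.sum fun s _ => ?_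
  simp only [det_apply]
  refine ContDiffOn.sum fun σ _ => ContDiffOn.const_smul _ ?_
  exact contDiffOn_prod fun i _ => h.contDiffOn_hessM _ _

lemma contDiffOn_newt (h : IsConeFn n c U G) (m : ℕ) (i j : Fin (n + 1)) :
    ContDiffOn ℝ 1 (fun x => newt (hessM n G x) m i j) U := by
  induction m generalizing i j with
  | zero => exact contDiffOn_const
  | succ m ih =>
    simp only [newt, Matrix.sub_apply, Matrix.smul_apply, Matrix.mul_apply, smul_eq_mul]
    exact ((h.contDiffOn_sigP _).mul contDiffOn_const).sub
      (ContDiffOn.sum fun a _ => (h.contDiffOn_hessM _ _).mul (ih _ _))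

lemma hasFDerivAt_of_contDiffOn {f : V n → ℝ} (hU : IsOpen U) (hf : ContDiffOn ℝ 1 f U) {x : V n}
    (hx : x ∈ U) : HasFDerivAt f (fderiv ℝ f x) x :=
  ((hf.differentiableOn one_ne_zero).differentiableAt (hU.mem_nhds hx)).hasFDerivAt

/-- Symmetry of the third derivatives. -/
lemma fderiv_hessM_swap (h : IsConeFn n c U G) {x : V n} (hx : x ∈ U) (i a b : Fin (n + 1)) :
    fderiv ℝ (fun y => hessM n G y a b) x (EuclideanSpace.single i 1)
      = fderiv ℝ (fun y => hessM n G y i b) x (EuclideanSpace.single a 1) := by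
  set g : V n → ℝ := fun y => fderiv ℝ G y (EuclideanSpace.single b 1) with hg
  have hgC : ContDiffOn ℝ 2 g U := contDiffOn_fderiv_apply h.isOpen h.smooth (by norm_num) _
  have key : ∀ a i : Fin (n + 1),
      fderiv ℝ (fun y => hessM n G y a b) x (EuclideanSpace.single i 1)
        = fderiv ℝ (fderiv ℝ g) x (EuclideanSpace.single i 1) (EuclideanSpace.single a 1) := by
    intro a i
    have he : (fun y => hessM n G y a b)
        =ᶠ[𝓝 x] fun y => fderiv ℝ g y (EuclideanSpace.single a 1) := by
      filter_upwards [h.isOpen.mem_nhds hx] with y hy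
      rw [(h.hasFDerivAt_fderiv_apply hy (EuclideanSpace.single b 1)).fderiv]
      rfl
    have hd : DifferentiableAt ℝ (fderiv ℝ g) x :=
      ((hgC.fderiv_of_isOpen (m := 1) h.isOpen (by norm_num)).differentiableOn
        one_ne_zero).differentiableAt (h.isOpen.mem_nhds hx)
    rw [he.fderiv_eq]
    have := hd.hasFDerivAt.clm_apply
      (hasFDerivAt_const (EuclideanSpace.single a (1 : ℝ) : V n) x)
    rw [this.fderiv]
    simp
  rw [key, key]
  exact ((hgC.contDiffAt (h.isOpen.mem_nhds hx)).isSymmSndFDerivAt (by simp)).eq _ _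

lemma fderiv_hessM_symm (h : IsConeFn n c U G) {x : V n} (hx : x ∈ U) (i a b : Fin (n + 1)) :
    fderiv ℝ (fun y => hessM n G y a b) x (EuclideanSpace.single i 1)
      = fderiv ℝ (fun y => hessM n G y b a) x (EuclideanSpace.single i 1) := by
  have : (fun y => hessM n G y a b) =ᶠ[𝓝 x] fun y => hessM n G y b a := by
    filter_upwards [h.isOpen.mem_nhds hx] with y hy
    exact h.hessM_symm hy a b
  rw [this.fderiv_eq]

lemma fderiv_sigP (h : IsConeFn n c U G) {x : V n} (hx : x ∈ U) (m : ℕ) (i : Fin (n + 1)) :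
    fderiv ℝ (fun y => sigP (hessM n G y) (m + 1)) x (EuclideanSpace.single i 1)
      = ∑ a, ∑ b, newt (hessM n G x) m a b
        * fderiv ℝ (fun y => hessM n G y b a) x (EuclideanSpace.single i 1) := by
  have hline : HasDerivAt (fun t : ℝ => x + t • (EuclideanSpace.single i (1 : ℝ) : V n))
      (EuclideanSpace.single i 1) 0 := by
    simpa using ((hasDerivAt_id (0 : ℝ)).smul_const
      (EuclideanSpace.single i (1 : ℝ) : V n)).const_add x
  have hx0 : x + (0 : ℝ) • (EuclideanSpace.single i (1 : ℝ) : V n) = x := by simp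
  have along : ∀ f : V n → ℝ, ContDiffOn ℝ 1 f U →
      HasDerivAt (fun t : ℝ => f (x + t • (EuclideanSpace.single i (1 : ℝ) : V n)))
        (fderiv ℝ f x (EuclideanSpace.single i 1)) 0 := by
    intro f hf
    have hf' := hasFDerivAt_of_contDiffOn h.isOpen hf hx
    rw [← hx0] at hf'
    have := hf'.comp_hasDerivAt (0 : ℝ) hline
    rw [hx0] at this
    exact this
  have h1 := along _ (h.contDiffOn_sigP (m + 1))
  have h2 := hasDerivAt_sigP (M := fun t : ℝ => hessM n G
    (x + t • (EuclideanSpace.single i (1 : ℝ) : V n)))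
    (M' := fun a b => fderiv ℝ (fun y => hessM n G y a b) x (EuclideanSpace.single i 1))
    (t₀ := 0) (fun a b => along _ (h.contDiffOn_hessM a b)) m
  rw [h1.unique h2, hx0]
  rfl

/-- The Newton transformations of a Hessian are divergence free. -/
lemma sum_fderiv_newt (h : IsConeFn n c U G) {x : V n} (hx : x ∈ U) (m : ℕ) (j : Fin (n + 1)) :
    ∑ i, fderiv ℝ (fun y => newt (hessM n G y) m i j) x (EuclideanSpace.single i 1) = 0 := by
  induction m generalizing j with
  | zero => simp [newt]
  | succ m ih =>
    have hterm : ∀ i, fderiv ℝ (fun y => newt (hessM n G y) (m + 1) i j) x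
          (EuclideanSpace.single i 1)
        = (if i = j then
            fderiv ℝ (fun y => sigP (hessM n G y) (m + 1)) x (EuclideanSpace.single i 1) else 0)
          - ∑ a, (newt (hessM n G x) m i a
              * fderiv ℝ (fun y => hessM n G y a j) x (EuclideanSpace.single i 1)
            + hessM n G x a j
              * fderiv ℝ (fun y => newt (hessM n G y) m i a) x (EuclideanSpace.single i 1)) := by
      intro i
      have e : (fun y => newt (hessM n G y) (m + 1) i j) = fun y =>
          sigP (hessM n G y) (m + 1) * (1 : Matrix (Fin (n + 1)) (Fin (n + 1)) ℝ) i j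
            - ∑ a, newt (hessM n G y) m i a * hessM n G y a j := by
        funext y
        rw [newt, newt_mul_comm]
        simp [Matrix.mul_apply]
      have hd := ((hasFDerivAt_of_contDiffOn h.isOpen (h.contDiffOn_sigP (m + 1)) hx).mul_const
        ((1 : Matrix (Fin (n + 1)) (Fin (n + 1)) ℝ) i j)).sub
        (HasFDerivAt.fun_sum (u := Finset.univ) fun a _ =>
          (hasFDerivAt_of_contDiffOn h.isOpen (h.contDiffOn_newt m i a) hx).mul
            (hasFDerivAt_of_contDiffOn h.isOpen (h.contDiffOn_hessM a j) hx))
      have hd' := hd.fderiv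
      rw [e]
      erw [hd']
      rw [_root_.sub_apply, _root_.sum_apply]
      split_ifs with hij <;> simp [hij, Matrix.one_apply]
    simp_rw [hterm]
    rw [Finset.sum_sub_distrib, Finset.sum_ite_eq' , if_pos (Finset.mem_univ _),
      h.fderiv_sigP hx]
    simp_rw [Finset.sum_add_distrib]
    have h0 : ∑ i, ∑ a, hessM n G x a j
        * fderiv ℝ (fun y => newt (hessM n G y) m i a) x (EuclideanSpace.single i 1) = 0 := by
      rw [Finset.sum_comm]
      refine Finset.sum_eq_zero fun a _ => ?_
      rw [← Finset.mul_sum, ih a, mul_zero]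
    rw [h0, add_zero, sub_eq_zero]
    refine Finset.sum_congr rfl fun a _ => Finset.sum_congr rfl fun b _ => ?_
    rw [h.fderiv_hessM_symm hx j b a, h.fderiv_hessM_swap hx j a b,
      h.fderiv_hessM_symm hx a j b]

end IsConeFn

lemma newt_transpose {ι : Type*} [Fintype ι] [DecidableEq ι] {A : Matrix ι ι ℝ} (hA : Aᵀ = A)
    (m : ℕ) : (newt A m)ᵀ = newt A m := by
  induction m with
  | zero => simp [newt]
  | succ m ih =>
    rw [newt, transpose_sub, transpose_smul, transpose_one, transpose_mul, ih, hA, newt_mul_comm]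

lemma newt_mulVec_mem {ι : Type*} [Fintype ι] [DecidableEq ι] {A : Matrix ι ι ℝ}
    {S : Submodule ℝ (ι → ℝ)} (hA : ∀ v ∈ S, A *ᵥ v ∈ S) (m : ℕ) {v : ι → ℝ} (hv : v ∈ S) :
    newt A m *ᵥ v ∈ S := by
  induction m generalizing v with
  | zero => simpa [newt] using hv
  | succ m ih =>
    rw [newt, sub_mulVec, smul_mulVec, one_mulVec, ← mulVec_mulVec]
    exact S.sub_mem (S.smul_mem _ hv) (hA _ (ih hv))

end HessianFields

section CrossFields

open Topology Filter Matrix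

variable {n : ℕ} {c : ℝ} {U : Set (V n)} {G G₁ G₂ : V n → ℝ}

/-- The components of `G₁ ∇G₂ - G₂ ∇G₁`. -/
def crossGrad (n : ℕ) (G₁ G₂ : V n → ℝ) (j : Fin (n + 1)) (x : V n) : ℝ :=
  G₁ x * fderiv ℝ G₂ x (EuclideanSpace.single j 1)
    - G₂ x * fderiv ℝ G₁ x (EuclideanSpace.single j 1)

/-- The field `T (G₁ ∇G₂ - G₂ ∇G₁)` with `T` a Newton transformation of `D²G`. -/
def newtField (n : ℕ) (G G₁ G₂ : V n → ℝ) (m : ℕ) (i : Fin (n + 1)) (x : V n) : ℝ :=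
  ∑ j, newt (hessM n G x) m i j * crossGrad n G₁ G₂ j x

/-- The vectors orthogonal to `x`. -/
def radialPerp (x : V n) : Submodule ℝ (Fin (n + 1) → ℝ) where
  carrier := {q | q ⬝ᵥ (x : Fin (n + 1) → ℝ) = 0}
  zero_mem' := zero_dotProduct _
  add_mem' {p q} hp hq := by
    change (p + q) ⬝ᵥ _ = 0
    rw [add_dotProduct, show p ⬝ᵥ _ = 0 from hp, show q ⬝ᵥ _ = 0 from hq, add_zero]
  smul_mem' a q hq := by
    change (a • q) ⬝ᵥ _ = 0
    rw [smul_dotProduct, show q ⬝ᵥ _ = 0 from hq, smul_zero]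

lemma fderiv_eq_dotProduct (x v : V n) :
    (fun j => fderiv ℝ G x (EuclideanSpace.single j 1)) ⬝ᵥ (v : Fin (n + 1) → ℝ)
      = fderiv ℝ G x v := by
  have hv : v = ∑ j, v j • EuclideanSpace.single j (1 : ℝ) := by
    have := (EuclideanSpace.basisFun (Fin (n + 1)) ℝ).sum_repr v
    simpa using this.symm
  conv_rhs => rw [hv]
  rw [map_sum]
  refine Finset.sum_congr rfl fun j _ => ?_
  rw [map_smul, smul_eq_mul, mul_comm]

namespace IsConeFn

lemma hessM_mulVec_mem_radialPerp (h : IsConeFn n c U G) (hc : c ∈ Ioo (0 : ℝ) 1) {x : V n}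
    (hx : x ∈ closedConeSet n c) (v : Fin (n + 1) → ℝ) : hessM n G x *ᵥ v ∈ radialPerp x := by
  change _ ⬝ᵥ _ = 0
  rw [dotProduct_comm]
  have := dotProduct_hessM_mulVec (G := G) x (WithLp.toLp 2 v) x
  rw [this, h.hess_self hc hx]
  rfl

lemma hessM_mulVec_last (h : IsConeFn n c U G) (hc : c ∈ Ioo (0 : ℝ) 1) {x : V n}
    (hx : x ∈ closedConeSet n c) (hxb : x (Fin.last n) = c * ‖x‖) {v : Fin (n + 1) → ℝ}
    (hv : v ∈ radialPerp x) (hvl : v (Fin.last n) = 0) :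
    (hessM n G x *ᵥ v) (Fin.last n) = 0 := by
  have h1 := hessM_mulVec (G := G) x (WithLp.toLp 2 v) (Fin.last n)
  rw [h1, h.hess_symm (h.subset hx)]
  refine h.hess_bdry hc hx hxb hvl ?_
  rw [EuclideanSpace.inner_eq_star_dotProduct]
  have : v ⬝ᵥ (x : Fin (n + 1) → ℝ) = 0 := hv
  simpa [dotProduct_comm] using this

lemma crossGrad_mem_radialPerp (h₁ : IsConeFn n c U G₁) (h₂ : IsConeFn n c U G₂) {x : V n}
    (hx : x ∈ closedConeSet n c) : (fun j => crossGrad n G₁ G₂ j x) ∈ radialPerp x := by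
  have : (fun j => crossGrad n G₁ G₂ j x)
      = G₁ x • (fun j => fderiv ℝ G₂ x (EuclideanSpace.single j 1))
        - G₂ x • fun j => fderiv ℝ G₁ x (EuclideanSpace.single j 1) := rfl
  change _ ⬝ᵥ _ = 0
  rw [this, sub_dotProduct, smul_dotProduct, smul_dotProduct, fderiv_eq_dotProduct,
    fderiv_eq_dotProduct, h₁.fderiv_self hx, h₂.fderiv_self hx, smul_eq_mul, smul_eq_mul]
  ring

lemma newtField_dot (h : IsConeFn n c U G) (h₁ : IsConeFn n c U G₁) (h₂ : IsConeFn n c U G₂)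
    (hc : c ∈ Ioo (0 : ℝ) 1) (m : ℕ) {x : V n} (hx : x ∈ closedConeSet n c) :
    ∑ i, newtField n G G₁ G₂ m i x * x i = 0 :=
  newt_mulVec_mem (S := radialPerp x) (fun v _ => h.hessM_mulVec_mem_radialPerp hc hx v) m
    (h₁.crossGrad_mem_radialPerp h₂ hx)

lemma newtField_last (h : IsConeFn n c U G) (h₁ : IsConeFn n c U G₁) (h₂ : IsConeFn n c U G₂)
    (hc : c ∈ Ioo (0 : ℝ) 1) (m : ℕ) {x : V n} (hx : x ∈ closedConeSet n c)
    (hxb : x (Fin.last n) = c * ‖x‖) : newtField n G G₁ G₂ m (Fin.last n) x = 0 := by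
  have h0 : crossGrad n G₁ G₂ (Fin.last n) x = 0 := by
    have e₁ := h₁.bdry x hx hxb
    have e₂ := h₂.bdry x hx hxb
    rw [Etop] at e₁ e₂
    rw [crossGrad, e₁, e₂, mul_zero, mul_zero, sub_zero]
  exact (newt_mulVec_mem
    (S := radialPerp x ⊓ LinearMap.ker (LinearMap.proj (R := ℝ) (φ := fun _ => ℝ) (Fin.last n)))
    (fun v hv => ⟨h.hessM_mulVec_mem_radialPerp hc hx v, h.hessM_mulVec_last hc hx hxb hv.1 hv.2⟩)
    m ⟨h₁.crossGrad_mem_radialPerp h₂ hx, h0⟩).2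

lemma contDiffOn_crossGrad (h₁ : IsConeFn n c U G₁) (h₂ : IsConeFn n c U G₂)
    (j : Fin (n + 1)) : ContDiffOn ℝ 1 (crossGrad n G₁ G₂ j) U :=
  ((h₁.smooth.of_le (by norm_num)).mul
    (contDiffOn_fderiv_apply h₁.isOpen h₂.smooth (by norm_num) _)).sub
    ((h₂.smooth.of_le (by norm_num)).mul
      (contDiffOn_fderiv_apply h₁.isOpen h₁.smooth (by norm_num) _))

lemma contDiffOn_newtField (h : IsConeFn n c U G) (h₁ : IsConeFn n c U G₁)
    (h₂ : IsConeFn n c U G₂) (m : ℕ) (i : Fin (n + 1)) :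
    ContDiffOn ℝ 1 (newtField n G G₁ G₂ m i) U :=
  ContDiffOn.sum fun j _ => (h.contDiffOn_newt m i j).mul (h₁.contDiffOn_crossGrad h₂ j)

lemma fderiv_crossGrad (h₁ : IsConeFn n c U G₁) (h₂ : IsConeFn n c U G₂) {x : V n} (hx : x ∈ U)
    (i j : Fin (n + 1)) :
    fderiv ℝ (crossGrad n G₁ G₂ j) x (EuclideanSpace.single i 1)
      = G₁ x * hessM n G₂ x j i - G₂ x * hessM n G₁ x j i
        + (fderiv ℝ G₁ x (EuclideanSpace.single i 1) * fderiv ℝ G₂ x (EuclideanSpace.single j 1)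
          - fderiv ℝ G₂ x (EuclideanSpace.single i 1)
            * fderiv ℝ G₁ x (EuclideanSpace.single j 1)) := by
  have hd := (((h₁.differentiableAt hx).hasFDerivAt.mul (h₂.hasFDerivAt_fderiv_apply hx
      (EuclideanSpace.single j 1))).sub ((h₂.differentiableAt hx).hasFDerivAt.mul
      (h₁.hasFDerivAt_fderiv_apply hx (EuclideanSpace.single j 1)))).fderiv
  have e : crossGrad n G₁ G₂ j = (G₁ * fun y => fderiv ℝ G₂ y (EuclideanSpace.single j 1))
      - G₂ * fun y => fderiv ℝ G₁ y (EuclideanSpace.single j 1) := rfl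
  rw [e, hd, h₁.hessM_symm hx j i, h₂.hessM_symm hx j i]
  simp only [_root_.sub_apply, _root_.add_apply, _root_.smul_apply, smul_eq_mul,
    ContinuousLinearMap.flip_apply, hessM]
  ring

lemma divg_newtField (h : IsConeFn n c U G) (h₁ : IsConeFn n c U G₁)
    (h₂ : IsConeFn n c U G₂) (m : ℕ) {x : V n} (hx : x ∈ U) :
    divg n (newtField n G G₁ G₂ m) x
      = G₁ x * (newt (hessM n G x) m * hessM n G₂ x).trace
        - G₂ x * (newt (hessM n G x) m * hessM n G₁ x).trace := by
  set T := newt (hessM n G x) m with hT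
  have hTs : ∀ i j, T i j = T j i := by
    have : (hessM n G x)ᵀ = hessM n G x := by
      ext i j
      exact h.hessM_symm hx j i
    intro i j
    conv_lhs => rw [hT, ← newt_transpose this m]
    rfl
  have hterm : ∀ i, fderiv ℝ (newtField n G G₁ G₂ m i) x (EuclideanSpace.single i 1)
      = ∑ j, (T i j * fderiv ℝ (crossGrad n G₁ G₂ j) x (EuclideanSpace.single i 1)
        + crossGrad n G₁ G₂ j x * fderiv ℝ (fun y => newt (hessM n G y) m i j) x
          (EuclideanSpace.single i 1)) := by
    intro i
    have hd := (HasFDerivAt.fun_sum (u := Finset.univ) fun j _ =>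
      (hasFDerivAt_of_contDiffOn h.isOpen (h.contDiffOn_newt m i j) hx).mul
        (hasFDerivAt_of_contDiffOn h.isOpen (h₁.contDiffOn_crossGrad h₂ j) hx)).fderiv
    have e : newtField n G G₁ G₂ m i = fun y => ∑ j,
        ((fun y => newt (hessM n G y) m i j) * crossGrad n G₁ G₂ j) y := rfl
    rw [e, hd, _root_.sum_apply]
    rfl
  unfold divg
  simp_rw [hterm, Finset.sum_add_distrib]
  have h0 : ∑ i, ∑ j, crossGrad n G₁ G₂ j x * fderiv ℝ (fun y => newt (hessM n G y) m i j) x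
      (EuclideanSpace.single i 1) = 0 := by
    rw [Finset.sum_comm]
    refine Finset.sum_eq_zero fun j _ => ?_
    rw [← Finset.mul_sum, h.sum_fderiv_newt hx, mul_zero]
  have h3 : ∑ i, ∑ j, T i j * (fderiv ℝ G₁ x (EuclideanSpace.single i 1)
      * fderiv ℝ G₂ x (EuclideanSpace.single j 1)) = ∑ i, ∑ j, T i j
        * (fderiv ℝ G₂ x (EuclideanSpace.single i 1)
          * fderiv ℝ G₁ x (EuclideanSpace.single j 1)) := by
    rw [Finset.sum_comm]
    refine Finset.sum_congr rfl fun i _ => Finset.sum_congr rfl fun j _ => ?_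
    rw [hTs j i]
    ring
  rw [h0, add_zero]
  simp_rw [h₁.fderiv_crossGrad h₂ hx, mul_add, mul_sub, Finset.sum_add_distrib,
    Finset.sum_sub_distrib]
  rw [h3, sub_self, add_zero]
  simp only [Matrix.trace, Matrix.diag, Matrix.mul_apply, Finset.mul_sum]
  congr 1 <;> exact Finset.sum_congr rfl fun i _ => Finset.sum_congr rfl fun j _ => by ring

/-- Positive functions with the same `σ_{m+1}` of the Hessian, `m ≥ 1`, have the same Hessian. -/
lemma hessM_eq_of_sigP_eq (h₁ : IsConeFn n c U G₁) (h₂ : IsConeFn n c U G₂)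
    (hc : c ∈ Ioo (0 : ℝ) 1) (hG₁ : HasPosHess n c G₁) (hG₂ : HasPosHess n c G₂)
    (hp₁ : ∀ x ∈ openConeSet n c, 0 < G₁ x) (hp₂ : ∀ x ∈ openConeSet n c, 0 < G₂ x) {m : ℕ}
    (hm : 1 ≤ m) (hmn : m + 1 ≤ n)
    (heq : ∀ x ∈ openConeSet n c, sigP (hessM n G₁ x) (m + 1) = sigP (hessM n G₂ x) (m + 1))
    {x : V n} (hx : x ∈ openConeSet n c) : hessM n G₁ x = hessM n G₂ x := by
  set Z : Fin (n + 1) → V n → ℝ := fun i y =>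
    newtField n G₁ G₁ G₂ m i y - newtField n G₂ G₁ G₂ m i y with hZ
  have hZ₁ := h₁.contDiffOn_newtField h₁ h₂ m
  have hZ₂ := h₂.contDiffOn_newtField h₁ h₂ m
  have hdiv : ∀ y ∈ openConeSet n c, divg n Z y
      = G₁ y * ((newt (hessM n G₁ y) m * hessM n G₂ y).trace
          - ((m : ℝ) + 1) * sigP (hessM n G₁ y) (m + 1))
        + G₂ y * ((newt (hessM n G₂ y) m * hessM n G₁ y).trace
          - ((m : ℝ) + 1) * sigP (hessM n G₂ y) (m + 1)) := by
    intro y hy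
    have hy' := openConeSet_subset c hy
    have hyU := h₁.subset hy'
    have e : divg n Z y =
        divg n (newtField n G₁ G₁ G₂ m) y - divg n (newtField n G₂ G₁ G₂ m) y := by
      unfold divg
      rw [← Finset.sum_sub_distrib]
      refine Finset.sum_congr rfl fun i _ => ?_
      rw [((hasFDerivAt_of_contDiffOn h₁.isOpen (hZ₁ i) hyU).fun_sub
        (hasFDerivAt_of_contDiffOn h₁.isOpen (hZ₂ i) hyU)).fderiv]
      rfl
    rw [e, h₁.divg_newtField h₁ h₂ m hyU, h₂.divg_newtField h₁ h₂ m hyU,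
      trace_newt_mul_self (h₁.posSemidef_hessM hG₁ hy'),
      trace_newt_mul_self (h₂.posSemidef_hessM hG₂ hy'), heq y hy]
    ring
  have htan₁ : ∀ y ∈ openConeSet n c, _ := fun y hy =>
    sigP_tangent hm (h₁.posSemidef_hessM hG₁ (openConeSet_subset c hy))
      (h₂.posSemidef_hessM hG₂ (openConeSet_subset c hy))
      (h₁.sigP_hessM_pos hG₁ (openConeSet_subset c hy) hmn) (heq y hy)
  have htan₂ : ∀ y ∈ openConeSet n c, _ := fun y hy =>
    sigP_tangent hm (h₂.posSemidef_hessM hG₂ (openConeSet_subset c hy))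
      (h₁.posSemidef_hessM hG₁ (openConeSet_subset c hy))
      (h₂.sigP_hessM_pos hG₂ (openConeSet_subset c hy) hmn) (heq y hy).symm
  have hzero := divg_eq_zero_of_nonneg hc h₁.isOpen h₁.subset (Z := Z)
    (fun i => (hZ₁ i).sub (hZ₂ i)) (fun y hy => by
      have hy' := openConeSet_subset c hy
      simp only [hZ, sub_mul, Finset.sum_sub_distrib]
      rw [h₁.newtField_dot h₁ h₂ hc m hy', h₂.newtField_dot h₁ h₂ hc m hy', sub_zero])
    (fun y hy0 hyb => by
      have hy' : y ∈ closedConeSet n c := ⟨hy0, hyb.ge⟩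
      simp only [hZ]
      rw [h₁.newtField_last h₁ h₂ hc m hy' hyb, h₂.newtField_last h₁ h₂ hc m hy' hyb, sub_zero])
    (fun y hy => by
      rw [hdiv y hy]
      exact add_nonneg (mul_nonneg (hp₁ y hy).le (sub_nonneg.2 (htan₁ y hy).1))
        (mul_nonneg (hp₂ y hy).le (sub_nonneg.2 (htan₂ y hy).1))) hx
  rw [hdiv x hx] at hzero
  have t₁ := mul_nonneg (hp₁ x hx).le (sub_nonneg.2 (htan₁ x hx).1)
  have t₂ := mul_nonneg (hp₂ x hx).le (sub_nonneg.2 (htan₂ x hx).1)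
  have h0 : G₁ x * ((newt (hessM n G₁ x) m * hessM n G₂ x).trace
          - ((m : ℝ) + 1) * sigP (hessM n G₁ x) (m + 1)) = 0 := by linarith
  exact (htan₁ x hx).2 (sub_eq_zero.1 ((mul_eq_zero.1 h0).resolve_left (hp₁ x hx).ne'))

/-- If the Hessian is trace free, the gradient of the vertical derivative vanishes. -/
lemma hess_Etop_eq_zero_of_trace (h : IsConeFn n c U G) (hc : c ∈ Ioo (0 : ℝ) 1)
    (htr : ∀ x ∈ openConeSet n c, (hessM n G x).trace = 0) {x : V n} (hx : x ∈ openConeSet n c)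
    (i : Fin (n + 1)) : hessM n G x i (Fin.last n) = 0 := by
  set W : V n → ℝ := fun y => fderiv ℝ G y (Etop n) with hW
  set Z : Fin (n + 1) → V n → ℝ := fun i y => W y * hessM n G y i (Fin.last n) with hZ
  have hWC : ContDiffOn ℝ 1 W U := contDiffOn_fderiv_apply h.isOpen h.smooth (by norm_num) _
  have hdiv : ∀ y ∈ openConeSet n c, divg n Z y = ∑ i, hessM n G y i (Fin.last n) ^ 2 := by
    intro y hy
    have hyU := h.subset (openConeSet_subset c hy)
    have hlap : ∑ i, fderiv ℝ (fun z => hessM n G z i (Fin.last n)) y (EuclideanSpace.single i 1)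
        = 0 := by
      have e1 : ∀ i, fderiv ℝ (fun z => hessM n G z i (Fin.last n)) y
            (EuclideanSpace.single i 1)
          = fderiv ℝ (fun z => hessM n G z i i) y (EuclideanSpace.single (Fin.last n) 1) :=
        fun i => by rw [h.fderiv_hessM_symm hyU, h.fderiv_hessM_swap hyU]
      have e2 : (fun z => ∑ i, hessM n G z i i) =ᶠ[𝓝 y] fun _ => 0 := by
        filter_upwards [(isOpen_openConeSet c).mem_nhds hy] with z hz
        exact htr z hz
      have e3 := (HasFDerivAt.fun_sum (u := Finset.univ) fun i _ =>
        hasFDerivAt_of_contDiffOn h.isOpen (h.contDiffOn_hessM i i) hyU).fderiv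
      rw [e2.fderiv_eq] at e3
      simp_rw [e1]
      rw [← _root_.sum_apply, ← e3]
      simp
    have hterm : ∀ i, fderiv ℝ (Z i) y (EuclideanSpace.single i 1)
        = W y * fderiv ℝ (fun z => hessM n G z i (Fin.last n)) y (EuclideanSpace.single i 1)
          + hessM n G y i (Fin.last n) ^ 2 := by
      intro i
      have hd := ((h.hasFDerivAt_fderiv_apply hyU (Etop n)).mul
        (hasFDerivAt_of_contDiffOn h.isOpen (h.contDiffOn_hessM i (Fin.last n)) hyU)).fderiv
      have e : Z i = (fun y => fderiv ℝ G y (Etop n)) * fun y => hessM n G y i (Fin.last n) := rfl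
      rw [e, hd, pow_two]
      rfl
    unfold divg
    simp_rw [hterm, Finset.sum_add_distrib, ← Finset.mul_sum]
    rw [hlap, mul_zero, zero_add]
  have hzero := divg_eq_zero_of_nonneg hc h.isOpen h.subset (Z := Z)
    (fun i => hWC.mul (h.contDiffOn_hessM i _)) (fun y hy => by
      have hy' := openConeSet_subset c hy
      have e1 := dotProduct_hessM_mulVec (G := G) y (Etop n) y
      rw [h.hess_self hc hy', dotProduct_comm] at e1
      have e2 : ∀ i, hessM n G y i (Fin.last n) = (hessM n G y *ᵥ (Etop n)) i := fun i => by
        rw [hessM_mulVec]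
        rfl
      simp only [hZ, e2, mul_assoc, ← Finset.mul_sum]
      rw [show ∑ i, (hessM n G y *ᵥ (Etop n)) i * y i = 0 from e1, mul_zero])
    (fun y hy0 hyb => by
      simp only [hZ, hW]
      rw [h.bdry y ⟨hy0, hyb.ge⟩ hyb, zero_mul])
    (fun y hy => by
      rw [hdiv y hy]
      positivity) hx
  rw [hdiv x hx, Finset.sum_eq_zero_iff_of_nonneg fun i _ => sq_nonneg _] at hzero
  exact pow_eq_zero_iff two_ne_zero |>.1 (hzero i (Finset.mem_univ i))

/-- A function whose vertical derivative has vanishing gradient is horizontal and linear. -/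
lemma exists_eq_inner (h : IsConeFn n c U G) (hc : c ∈ Ioo (0 : ℝ) 1) (hn : 1 ≤ n)
    (hz : ∀ x ∈ openConeSet n c, ∀ i, hessM n G x i (Fin.last n) = 0) :
    ∃ a : V n, a (Fin.last n) = 0 ∧ ∀ x ∈ closedConeSet n c, G x = ⟪a, x⟫ := by
  set W : V n → ℝ := fun y => fderiv ℝ G y (Etop n) with hW
  have hWd : ∀ x ∈ openConeSet n c, HasFDerivAt W 0 x := fun x hx => by
    have hxU := h.subset (openConeSet_subset c hx)
    refine (h.hasFDerivAt_fderiv_apply hxU (Etop n)).congr_fderiv ?_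
    ext v
    rw [ContinuousLinearMap.flip_apply, h.hess_symm hxU, Etop, ← hessM_mulVec]
    have hrow : hessM n G x (Fin.last n) = 0 :=
      funext fun j => (h.hessM_symm hxU _ _).trans (hz x hx j)
    change hessM n G x (Fin.last n) ⬝ᵥ (v : Fin (n + 1) → ℝ) = (0 : ℝ)
    rw [hrow, zero_dotProduct]
  have hWc : EqOn W (fun _ => W (Etop n)) (openConeSet n c) := fun x hx =>
    (isOpen_openConeSet c).is_const_of_fderiv_eq_zero (𝕜 := ℝ)
      (convex_openConeSet hc.1.le).isPreconnected
      (fun y hy => (hWd y hy).differentiableAt.differentiableWithinAt)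
      (fun y hy => (hWd y hy).fderiv) hx (Etop_mem_openConeSet hc)
  have hWcont : ContinuousOn W (closedConeSet n c) :=
    ((contDiffOn_fderiv_apply h.isOpen h.smooth (m' := 1) (by norm_num) _).continuousOn).mono
      h.subset
  have hWc' := eqOn_closedConeSet hc hWcont continuousOn_const hWc
  obtain ⟨b, hb, hbn, hbl, -⟩ := exists_bdry_point hc hn
  have hE := openConeSet_subset c (Etop_mem_openConeSet (n := n) hc)
  have hWE : W (Etop n) = 0 :=
    (hWc' hb).symm.trans (h.bdry b hb (by rw [hbl, hbn, mul_one]))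
  have hW0 : ∀ x ∈ closedConeSet n c, fderiv ℝ G x (Etop n) = 0 := fun x hx =>
    (hWc' hx).trans hWE
  have hGE : G (Etop n) = 0 := by rw [← h.fderiv_self hE]; exact hWE
  have htrans : ∀ x ∈ closedConeSet n c, ∀ s : ℝ, 0 < s → G (x + s • Etop n) = G x := by
    intro x hx s hs
    have hmem : ∀ t ∈ Icc (0 : ℝ) s, x + t • Etop n ∈ closedConeSet n c := by
      intro t ht
      rcases ht.1.eq_or_lt with rfl | ht0
      · simpa using hx
      · exact openConeSet_subset c (add_smul_mem_openConeSet hc hx.2 ht0)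
    have hd : ∀ t ∈ Icc (0 : ℝ) s, HasDerivAt (fun t : ℝ => G (x + t • Etop n)) 0 t := by
      intro t ht
      have hline : HasDerivAt (fun t : ℝ => x + t • Etop n) (Etop n) t := by
        simpa using ((hasDerivAt_id t).smul_const (Etop n)).const_add x
      rw [← hW0 _ (hmem t ht)]
      exact (h.differentiableAt (h.subset (hmem t ht))).hasFDerivAt.comp_hasDerivAt t hline
    obtain ⟨t, -, ht⟩ := exists_hasDerivAt_eq_slope _ _ hs
      (fun t ht => (hd t ht).continuousAt.continuousWithinAt)
      (fun t ht => hd t (Ioo_subset_Icc_self ht))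
    rw [eq_div_iff (by simpa using hs.ne')] at ht
    simp only [zero_mul, zero_smul, add_zero] at ht
    linarith
  have hlin : ∀ x ∈ closedConeSet n c, fderiv ℝ G (Etop n) x = G x := by
    intro x hx
    have hline : HasDerivAt (fun t : ℝ => Etop n + t • x) x 0 := by
      simpa using ((hasDerivAt_id (0 : ℝ)).smul_const x).const_add (Etop n)
    have hE0 : Etop n + (0 : ℝ) • x = Etop n := by simp
    have hG := (h.differentiableAt (h.subset hE)).hasFDerivAt
    rw [← hE0] at hG
    have e1 := hG.comp_hasDerivAt (0 : ℝ) hline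
    rw [hE0] at e1
    have e2 : HasDerivWithinAt (G ∘ fun t : ℝ => Etop n + t • x) (G x) (Ici 0) 0 := by
      have e3 : HasDerivAt (fun t : ℝ => t * G x) (G x) 0 := by
        simpa using (hasDerivAt_id (0 : ℝ)).mul_const (G x)
      refine e3.hasDerivWithinAt.congr (fun t ht => ?_) (by simp [hGE])
      rcases (mem_Ici.1 ht).eq_or_lt with rfl | ht0
      · simp [hGE]
      · have e4 : Etop n + t • x = t • (x + t⁻¹ • Etop n) := by
          rw [smul_add, smul_smul, mul_inv_cancel₀ ht0.ne', one_smul, add_comm]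
        rw [Function.comp_apply, e4, h.homog t ht0 _ (openConeSet_subset c
          (add_smul_mem_openConeSet hc hx.2 (inv_pos.2 ht0))), htrans x hx _ (inv_pos.2 ht0)]
    exact (uniqueDiffWithinAt_Ici (0 : ℝ)).eq_deriv _ e1.hasDerivWithinAt e2
  refine ⟨(InnerProductSpace.toDual ℝ (V n)).symm (fderiv ℝ G (Etop n)), ?_, fun x hx => ?_⟩
  · rw [← inner_single, InnerProductSpace.toDual_symm_apply]
    exact hWE
  · rw [InnerProductSpace.toDual_symm_apply, hlin x hx]

end IsConeFn

end CrossFields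

section CapillaryUniqueness

open Matrix

lemma sigP_smul {ι : Type*} [Fintype ι] [DecidableEq ι] (r : ℝ) (A : Matrix ι ι ℝ) (m : ℕ) :
    sigP (r • A) m = r ^ m * sigP A m := by
  unfold sigP
  rw [Finset.mul_sum]
  refine Finset.sum_congr rfl fun s hs => ?_
  rw [submatrix_smul, Pi.smul_apply, Pi.smul_apply, det_smul, Fintype.card_coe,
    (Finset.mem_powersetCard.1 hs).2]

variable {n : ℕ} {θ : ℝ}

lemma cos_mem_Ioo (hθ : θ ∈ Ioo 0 (π / 2)) : Real.cos θ ∈ Ioo (0 : ℝ) 1 := by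
  refine ⟨Real.cos_pos_of_mem_Ioo ⟨by linarith [hθ.1, Real.pi_pos], hθ.2⟩, ?_⟩
  rw [← Real.cos_zero]
  exact Real.cos_lt_cos_of_nonneg_of_le_pi_div_two le_rfl hθ.2.le hθ.1

lemma sphCap_subset_closedConeSet : sphCap n θ ⊆ closedConeSet n (Real.cos θ) := fun u hu =>
  ⟨norm_pos_iff.1 (by rw [hu.1]; exact one_pos), by rw [hu.1, mul_one]; exact hu.2⟩

lemma exists_smul_sphCap {x : V n} (hx : x ∈ closedConeSet n (Real.cos θ)) :
    ∃ u ∈ sphCap n θ, x = ‖x‖ • u := by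
  have hN : 0 < ‖x‖ := norm_pos_iff.2 hx.1
  refine ⟨‖x‖⁻¹ • x, ⟨norm_smul_inv_norm hx.1, ?_⟩, (smul_inv_smul₀ hN.ne' x).symm⟩
  change Real.cos θ ≤ ‖x‖⁻¹ * x (Fin.last n)
  rw [inv_mul_eq_div, le_div_iff₀ hN]
  exact hx.2

lemma exists_isConeFn (hθ : θ ∈ Ioo 0 (π / 2)) {s G : V n → ℝ} (h : IsHomExt n θ 3 s G)
    (hb : IsCapillaryF n θ G) : ∃ U, IsConeFn n (Real.cos θ) U G := by
  obtain ⟨⟨U, hU, hsub, hG⟩, hhom, -⟩ := h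
  have hc := cos_mem_Ioo hθ
  have hsub' : closedConeSet n (Real.cos θ) ⊆ U := fun x hx => by
    obtain ⟨u, hu, hxu⟩ := exists_smul_sphCap hx
    exact hsub ⟨‖x‖, norm_pos_iff.2 hx.1, u, hu, hxu⟩
  have hG' : ContDiffOn ℝ 3 G U := hG
  have hhom' : ∀ l : ℝ, 0 < l → ∀ x ∈ closedConeSet n (Real.cos θ), G (l • x) = l * G x := by
    intro l hl x hx
    obtain ⟨u, hu, hxu⟩ := exists_smul_sphCap hx
    have hN : 0 < ‖x‖ := norm_pos_iff.2 hx.1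
    generalize ‖x‖ = N at hxu hN
    rw [hxu, smul_smul, hhom _ (mul_pos hl hN) u hu, hhom _ hN u hu, mul_assoc]
  refine ⟨U, hU, hsub', hG', hhom', fun x hx hxb => ?_⟩
  have hN : 0 < ‖x‖ := norm_pos_iff.2 hx.1
  obtain ⟨u, hu, hxu⟩ := exists_smul_sphCap hx
  have h1 := fderiv_smul_of_homog hc hU hsub' (hG'.of_le (by norm_num)) hN (hhom' _ hN)
    (sphCap_subset_closedConeSet hu)
  rw [← hxu] at h1
  rw [smul_right_injective _ hN.ne' h1]
  refine hb u ⟨hu.1, ?_⟩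
  have h2 : x (Fin.last n) = ‖x‖ * u (Fin.last n) := congrArg (fun z : V n => z (Fin.last n)) hxu
  rw [h2, mul_comm] at hxb
  exact mul_right_cancel₀ hN.ne' hxb

namespace IsConeFn

variable {U : Set (V n)} {G G₁ G₂ : V n → ℝ} {c : ℝ}

lemma hasPosHess (h : IsConeFn n (Real.cos θ) U G) (hθ : θ ∈ Ioo 0 (π / 2)) (hτ : TauPos n θ G) :
    HasPosHess n (Real.cos θ) G := by
  intro x hx
  obtain ⟨u, hu, hxu⟩ := exists_smul_sphCap hx
  have hN : 0 < ‖x‖ := norm_pos_iff.2 hx.1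
  have h1 := h.hess_smul (cos_mem_Ioo hθ) hN (sphCap_subset_closedConeSet hu)
  rw [← hxu] at h1
  have h2 : ∀ v, ‖x‖ * fderiv ℝ (fderiv ℝ G) x v v = hessQ n G u v v := fun v =>
    congrArg (fun L : V n →L[ℝ] V n →L[ℝ] ℝ => L v v) h1
  refine ⟨fun v => ?_, fun v hv hvx => ?_⟩
  · exact nonneg_of_mul_nonneg_right ((h2 v).symm ▸ hτ.1 u hu v) hN
  · refine pos_of_mul_pos_right ((h2 v).symm ▸ hτ.2 u hu v hv ?_) hN.le
    rw [hxu, inner_smul_right] at hvx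
    exact (mul_eq_zero.1 hvx).resolve_left hN.ne'

lemma hessM_smul (h : IsConeFn n c U G) (hc : c ∈ Ioo (0 : ℝ) 1) {l : ℝ} (hl : 0 < l) {x : V n}
    (hx : x ∈ closedConeSet n c) : l • hessM n G (l • x) = hessM n G x := by
  ext i j
  exact congrArg (fun L : V n →L[ℝ] V n →L[ℝ] ℝ =>
    L (EuclideanSpace.single i 1) (EuclideanSpace.single j 1)) (h.hess_smul hc hl hx)

lemma sigP_hessM_eq (h₁ : IsConeFn n (Real.cos θ) U G₁) (h₂ : IsConeFn n (Real.cos θ) U G₂)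
    (hθ : θ ∈ Ioo 0 (π / 2)) {k : ℕ} (hk : k ≤ n)
    (heq : ∀ ζ ∈ capCap n θ, sigmaElem n k G₁ (ζ + Real.cos θ • Etop n)
      = sigmaElem n k G₂ (ζ + Real.cos θ • Etop n)) {x : V n}
    (hx : x ∈ closedConeSet n (Real.cos θ)) :
    sigP (hessM n G₁ x) k = sigP (hessM n G₂ x) k := by
  obtain ⟨u, hu, hxu⟩ := exists_smul_sphCap hx
  have hN : 0 < ‖x‖ := norm_pos_iff.2 hx.1
  have hc := cos_mem_Ioo hθ
  have hu' := sphCap_subset_closedConeSet hu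
  have h := heq (u - Real.cos θ • Etop n) ⟨by simpa using hu.2, by simpa using hu.1⟩
  rw [sub_add_cancel, sigmaElem, sigmaElem, charpoly_coeff_eq_sigP _ (by omega),
    charpoly_coeff_eq_sigP _ (by omega), ← h₁.hessM_smul hc hN hu', ← h₂.hessM_smul hc hN hu',
    ← hxu, sigP_smul, sigP_smul] at h
  exact mul_left_cancel₀ (pow_pos hN k).ne' h

lemma hessM_sub (h₁ : IsConeFn n c U G₁) (h₂ : IsConeFn n c U G₂) {x : V n} (hx : x ∈ U) :
    hessM n (fun x => G₁ x - G₂ x) x = hessM n G₁ x - hessM n G₂ x := by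
  ext i j
  exact congrArg (fun L : V n →L[ℝ] V n →L[ℝ] ℝ =>
    L (EuclideanSpace.single i 1) (EuclideanSpace.single j 1)) (h₁.hess_sub h₂ hx)

lemma hessM_sub_inner (h : IsConeFn n c U G) (a : V n) {x : V n} (hx : x ∈ U) :
    hessM n (fun x => G x - ⟪a, x⟫) x = hessM n G x := by
  ext i j
  exact congrArg (fun L : V n →L[ℝ] V n →L[ℝ] ℝ =>
    L (EuclideanSpace.single i 1) (EuclideanSpace.single j 1)) (h.hess_sub_inner a hx)

lemma _root_.HasPosHess.sub_inner (hG : HasPosHess n c G) (h : IsConeFn n c U G) (a : V n) :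
    HasPosHess n c fun x => G x - ⟪a, x⟫ := fun x hx => by
  rw [h.hess_sub_inner a (h.subset hx)]
  exact hG x hx

/-- Capillary functions with equal `σ_k` have difference with vanishing vertical Hessian. -/
lemma hessM_sub_last_eq_zero (h₁ : IsConeFn n c U G₁) (h₂ : IsConeFn n c U G₂)
    (hc : c ∈ Ioo (0 : ℝ) 1) (hG₁ : HasPosHess n c G₁) (hG₂ : HasPosHess n c G₂) {k : ℕ}
    (hk : 1 ≤ k) (hkn : k ≤ n)
    (heq : ∀ x ∈ openConeSet n c, sigP (hessM n G₁ x) k = sigP (hessM n G₂ x) k) {x : V n}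
    (hx : x ∈ openConeSet n c) (i : Fin (n + 1)) :
    hessM n (fun x => G₂ x - G₁ x) x i (Fin.last n) = 0 := by
  have hsub : openConeSet n c ⊆ U := (openConeSet_subset c).trans h₁.subset
  obtain ⟨m, rfl⟩ : ∃ m, k = m + 1 := ⟨k - 1, by omega⟩
  rcases Nat.eq_zero_or_pos m with rfl | hm
  · refine (h₂.sub h₁).hess_Etop_eq_zero_of_trace hc (fun y hy => ?_) hx i
    have := heq y hy
    rw [zero_add, sigP_one, sigP_one] at this
    rw [h₂.hessM_sub h₁ (hsub hy), trace_sub, this, sub_self]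
  · obtain ⟨a₁, ha₁, hp₁⟩ := h₁.exists_translate_pos hc (by omega) hG₁
    obtain ⟨a₂, ha₂, hp₂⟩ := h₂.exists_translate_pos hc (by omega) hG₂
    have h := hessM_eq_of_sigP_eq (h₁.sub (inner_left h₁.isOpen h₁.subset ha₁))
      (h₂.sub (inner_left h₁.isOpen h₁.subset ha₂)) hc (hG₁.sub_inner h₁ a₁)
      (hG₂.sub_inner h₂ a₂) hp₁ hp₂ hm hkn (fun y hy => by
        rw [h₁.hessM_sub_inner a₁ (hsub hy), h₂.hessM_sub_inner a₂ (hsub hy), heq y hy]) hx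
    rw [h₁.hessM_sub_inner a₁ (hsub hx), h₂.hessM_sub_inner a₂ (hsub hx)] at h
    rw [h₂.hessM_sub h₁ (hsub hx), h, sub_self]
    rfl

end IsConeFn

end CapillaryUniqueness

/-- uniqueness up to horizontal translation for `σ_k`. -/
theorem capillary_sigmaK_uniqueness (n k : ℕ) (hn : 1 ≤ n) (θ : ℝ)
    (hθ : θ ∈ Ioo 0 (π / 2)) (hk : 1 ≤ k) (hkn : k ≤ n)
    (s₁ G₁ s₂ G₂ : V n → ℝ)
    (h1 : IsHomExt n θ 3 s₁ G₁) (h1c : IsCapillaryF n θ G₁) (h1τ : TauPos n θ G₁)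
    (h2 : IsHomExt n θ 3 s₂ G₂) (h2c : IsCapillaryF n θ G₂) (h2τ : TauPos n θ G₂)
    (heq : ∀ ζ ∈ capCap n θ,
      sigmaElem n k G₁ (ζ + Real.cos θ • Etop n) =
        sigmaElem n k G₂ (ζ + Real.cos θ • Etop n)) :
    ∃ a : V n, a (Fin.last n) = 0 ∧ ∀ ζ ∈ capCap n θ, s₂ ζ = s₁ ζ + ⟪a, ζ⟫ := by
  obtain ⟨U₁, hG₁⟩ := exists_isConeFn hθ h1 h1c
  obtain ⟨U₂, hG₂⟩ := exists_isConeFn hθ h2 h2c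
  have hc := cos_mem_Ioo hθ
  have hU := hG₁.isOpen.inter hG₂.isOpen
  have hsub := subset_inter hG₁.subset hG₂.subset
  replace hG₁ := hG₁.mono hU hsub inter_subset_left
  replace hG₂ := hG₂.mono hU hsub inter_subset_right
  obtain ⟨a, ha, hdiff⟩ := (hG₂.sub hG₁).exists_eq_inner hc hn fun x hx i =>
    hG₁.hessM_sub_last_eq_zero hG₂ hc (hG₁.hasPosHess hθ h1τ) (hG₂.hasPosHess hθ h2τ) hk hkn
      (fun y hy => hG₁.sigP_hessM_eq hG₂ hθ hkn heq (openConeSet_subset _ hy)) hx i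
  refine ⟨a, ha, fun ζ hζ => ?_⟩
  have hu : ζ + Real.cos θ • Etop n ∈ sphCap n θ := ⟨hζ.2, by simpa using hζ.1⟩
  have h := hdiff _ (sphCap_subset_closedConeSet hu)
  rw [h1.2.2 ζ hζ, h2.2.2 ζ hζ, inner_add_right, inner_smul_right, Etop, inner_single, ha,
    mul_zero, add_zero] at h
  linarith
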